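/- arXiv:2311.10103 — 3 statements merged into one kernel-verified Lean document; each statement's English description precedes it below -/
import Mathlib

section
/- Let Φ be a Young function, (Ω, ℳ, μ) a measure space, N ≥ 1 an integer, and c₀ > 0. Suppose g : ℝ^N×Ω×ℝ^N×ℝ^N → ℝ is such that λ ↦ g(x,ω,y,λ) is strictly convex for all x ∈ ℝ^N and (μ⊗Lebesgue)-a.e. (ω,y) ∈ Ω×ℝ^N, and |g(x,ω,y,λ)| ≤ c₀(1 + Φ(|λ|)) for all x, λ ∈ ℝ^N and a.e. (ω,y). Then, with c₀' = 2Nc₀, one has |g(x,ω,y,λ) − g(x,ω,y,ν)| ≤ c₀' · (1 + Φ(2(1+|λ|+|ν|)))/(1+|λ|+|ν|) · |λ−ν| for all x, λ, ν ∈ ℝ^N and (μ⊗Lebesgue)-a.e. (ω,y) ∈ Ω×ℝ^N. -/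
open MeasureTheory Filter Topology ENNReal

noncomputable section

/-- Euclidean norm on `Fin N → ℝ`. -/
def enorm2 {N : ℕ} (v : Fin N → ℝ) : ℝ := Real.sqrt (∑ i, v i ^ 2)

/-- `Φ : [0,∞) → [0,∞)` is a Young function: continuous, convex, positive on `(0,∞)`,
with `Φ(t)/t → 0` as `t → 0⁺` and `Φ(t)/t → ∞` as `t → ∞` (so `Φ(0) = 0`). -/
def IsYoung (Φ : ℝ → ℝ) : Prop :=
  ContinuousOn Φ (Set.Ici 0) ∧ ConvexOn ℝ (Set.Ici 0) Φ ∧ Φ 0 = 0 ∧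
    (∀ t : ℝ, 0 < t → 0 < Φ t) ∧ (∀ t : ℝ, 0 ≤ t → 0 ≤ Φ t) ∧
    Tendsto (fun t => Φ t / t) (nhdsWithin 0 (Set.Ioi 0)) (nhds 0) ∧
    Tendsto (fun t => Φ t / t) atTop atTop

/-- The `Δ₂`-condition (at infinity). -/
def Delta2 (Φ : ℝ → ℝ) : Prop :=
  ∃ α : ℝ, 0 < α ∧ ∃ t₀ : ℝ, 0 ≤ t₀ ∧ ∀ t : ℝ, t₀ ≤ t → Φ (2 * t) ≤ α * Φ t

/-- The `Δ'`-condition (at infinity). -/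
def DeltaPrime (Φ : ℝ → ℝ) : Prop :=
  ∃ k : ℝ, 0 < k ∧ ∃ t₀ s₀ : ℝ, 0 ≤ t₀ ∧ 0 ≤ s₀ ∧
    ∀ t s : ℝ, t₀ ≤ t → s₀ ≤ s → Φ (t * s) ≤ k * Φ t * Φ s

/-- The conjugate Young function `Φ̃(t) = sup_{s ≥ 0} (st − Φ(s))`. -/
def conjY (Φ : ℝ → ℝ) (t : ℝ) : ℝ := sSup ((fun s => s * t - Φ s) '' Set.Ici 0)

/-- The Luxemburg norm `‖u‖_{Φ,X} = inf {δ > 0 : ∫_X Φ(|u|/δ) dν ≤ 1}` (`+∞` if no such `δ`). -/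
def luxNorm {X : Type*} [MeasurableSpace X] (Φ : ℝ → ℝ) (ν : Measure X) (u : X → ℝ) : ℝ≥0∞ :=
  sInf {d : ℝ≥0∞ | ∃ δ : ℝ, 0 < δ ∧ d = ENNReal.ofReal δ ∧
    (∫⁻ x, ENNReal.ofReal (Φ (|u x| / δ)) ∂ν) ≤ 1}

/-- An `N`-dimensional dynamical system on `Ω` preserving `μ`. -/
def IsDynSys {N : ℕ} {Ω : Type*} [MeasurableSpace Ω] (μ : Measure Ω)
    (T : (Fin N → ℝ) → Ω → Ω) : Prop :=
  T 0 = id ∧ (∀ x y : Fin N → ℝ, T (x + y) = T x ∘ T y) ∧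
    (∀ x : Fin N → ℝ, MeasurePreserving (T x) μ μ) ∧
    Measurable fun p : (Fin N → ℝ) × Ω => T p.1 p.2

/-- `ℤ^N`-periodicity. -/
def ZPeriodic {N : ℕ} (g : (Fin N → ℝ) → ℝ) : Prop :=
  ∀ (y : Fin N → ℝ) (k : Fin N → ℤ), g (y + fun i => (k i : ℝ)) = g y

/-- The unit cube `Y = [0,1]^N`. -/
def Ycube (N : ℕ) : Set (Fin N → ℝ) := Set.Icc 0 1

/-- `ℳ` is countably generated modulo `μ`-null sets. -/
def CountGenModNull {Ω : Type*} [MeasurableSpace Ω] (μ : Measure Ω) : Prop :=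
  ∃ S : ℕ → Set Ω, (∀ n, MeasurableSet (S n)) ∧
    ∀ A : Set Ω, MeasurableSet A →
      ∃ B : Set Ω, MeasurableSet[MeasurableSpace.generateFrom (Set.range S)] B ∧
        μ (symmDiff A B) = 0

/-- Weak stochastic two-scale convergence of `(u k)` to `u₀` along the sequence `(ε k)`. -/
def WeakStoch2Scale {N : ℕ} {Ω : Type*} [MeasurableSpace Ω] (μ : Measure Ω)
    (T : (Fin N → ℝ) → Ω → Ω) (Q : Set (Fin N → ℝ)) (ε : ℕ → ℝ)
    (u : ℕ → (Fin N → ℝ) → Ω → ℝ) (u₀ : (Fin N → ℝ) → Ω → (Fin N → ℝ) → ℝ) : Prop :=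
  ∀ φ : (Fin N → ℝ) → ℝ, ContDiff ℝ (⊤ : ℕ∞) φ → HasCompactSupport φ → tsupport φ ⊆ Q →
    ∀ ψ : Ω → ℝ, Measurable ψ → (∃ C : ℝ, ∀ ω, |ψ ω| ≤ C) →
      ∀ g : (Fin N → ℝ) → ℝ, Continuous g → ZPeriodic g →
        Tendsto
          (fun k => ∫ x in Q, (∫ ω, u k x ω * φ x * ψ (T ((ε k)⁻¹ • x) ω) *
              g (((ε k) ^ 2)⁻¹ • x) ∂μ))
          atTop
          (nhds (∫ x in Q, (∫ ω, (∫ y in Ycube N, u₀ x ω y * φ x * ψ ω * g y) ∂μ)))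


theorem enorm2_eq_aux {N : ℕ} (v : Fin N → ℝ) : enorm2 v = ‖WithLp.toLp 2 v‖ := by
  simp [enorm2, EuclideanSpace.norm_eq]

theorem young_mono_aux {Φ : ℝ → ℝ} (hΦ : IsYoung Φ) {s t : ℝ} (hs : 0 ≤ s) (hst : s ≤ t) :
    Φ s ≤ Φ t := by
  obtain ⟨-, hc, h0, -, hnn, -, -⟩ := hΦ
  rcases hst.eq_or_lt with rfl | hlt
  · exact le_rfl
  have ht : 0 < t := lt_of_le_of_lt hs hlt
  have hst1 : s / t ≤ 1 := (div_le_one ht).2 hst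
  have h := hc.2 (Set.mem_Ici.2 ht.le) (Set.mem_Ici.2 (le_refl (0 : ℝ)))
    (div_nonneg hs ht.le) (sub_nonneg.2 hst1) (by ring)
  simp only [smul_eq_mul, mul_zero, add_zero, h0, div_mul_cancel₀ s ht.ne'] at h
  have := mul_le_of_le_one_left (hnn t ht.le) hst1
  linarith

theorem one_side_aux {N : ℕ} (hN : 1 ≤ N) {Φ : ℝ → ℝ} (hΦ : IsYoung Φ) {c₀ : ℝ} (hc₀ : 0 < c₀)
    (f : (Fin N → ℝ) → ℝ) (hf : ConvexOn ℝ Set.univ f)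
    (hb : ∀ l, |f l| ≤ c₀ * (1 + Φ (enorm2 l))) (a b : Fin N → ℝ) (R : ℝ)
    (hR : R = 1 + enorm2 a + enorm2 b) :
    f a - f b ≤ (2 * (N : ℝ) * c₀) * ((1 + Φ (2 * R)) / R) * enorm2 (a - b) := by
  have hnn : ∀ v : Fin N → ℝ, 0 ≤ enorm2 v := fun v => Real.sqrt_nonneg _
  have ha := hnn a
  have hb' := hnn b
  have hRpos : 0 < R := by linarith
  have hΦR : 0 ≤ Φ (2 * R) := hΦ.2.2.2.2.1 _ (by linarith)
  rcases (hnn (a - b)).eq_or_lt with h0 | hpos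
  · have : a = b := by
      rw [enorm2_eq_aux] at h0
      have h1 := norm_eq_zero.1 h0.symm
      have h2 : a - b = 0 := (WithLp.toLp_eq_zero 2).1 h1
      exact sub_eq_zero.1 h2
    subst this
    rw [← h0]; simp
  set h := enorm2 (a - b) with hh
  set z : Fin N → ℝ := a + (R / h) • (a - b) with hz
  have hzn : enorm2 z ≤ 2 * R := by
    have h1 : enorm2 z ≤ enorm2 a + (R / h) * h := by
      rw [hh, enorm2_eq_aux, enorm2_eq_aux a, hz, WithLp.toLp_add, WithLp.toLp_smul]
      refine (norm_add_le _ _).trans ?_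
      rw [norm_smul, ← enorm2_eq_aux (a - b), Real.norm_of_nonneg (div_nonneg hRpos.le (hnn _))]
    rw [div_mul_cancel₀ _ hpos.ne'] at h1
    linarith
  have hfz := (abs_le.1 ((hb z).trans (mul_le_mul_of_nonneg_left
    (add_le_add_right (young_mono_aux hΦ (hnn z) hzn) 1) hc₀.le))).2
  have hfb := (abs_le.1 ((hb b).trans (mul_le_mul_of_nonneg_left
    (add_le_add_right (young_mono_aux hΦ hb' (show enorm2 b ≤ 2 * R by linarith)) 1) hc₀.le))).1
  have hs : 0 < h + R := by linarith
  have hcv := hf.2 (Set.mem_univ z) (Set.mem_univ b) (div_nonneg hpos.le hs.le)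
    (div_nonneg hRpos.le hs.le) (by field_simp)
  have hcomb : (h / (h + R)) • z + (R / (h + R)) • b = a := by
    ext i
    simp only [hz, Pi.add_apply, Pi.smul_apply, Pi.sub_apply, smul_eq_mul]
    field_simp
    ring
  rw [hcomb] at hcv
  simp only [smul_eq_mul] at hcv
  have hM : 0 ≤ c₀ * (1 + Φ (2 * R)) := by positivity
  have e : R / (h + R) = 1 - h / (h + R) := by field_simp; ring
  rw [e] at hcv
  have h1 : f a - f b ≤ h / (h + R) * (2 * (c₀ * (1 + Φ (2 * R)))) := by
    have : h / (h + R) * (f z - f b) ≤ h / (h + R) * (2 * (c₀ * (1 + Φ (2 * R)))) :=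
      mul_le_mul_of_nonneg_left (by linarith) (by positivity)
    linarith
  have h2 : h / (h + R) ≤ h / R := div_le_div_of_nonneg_left hpos.le hRpos (by linarith)
  have h3 : h / (h + R) * (2 * (c₀ * (1 + Φ (2 * R)))) ≤ h / R * (2 * (c₀ * (1 + Φ (2 * R)))) :=
    mul_le_mul_of_nonneg_right h2 (by linarith)
  have hN' : (1 : ℝ) ≤ N := by exact_mod_cast hN
  have h4 : h / R * (2 * (c₀ * (1 + Φ (2 * R)))) ≤ N * (h / R * (2 * (c₀ * (1 + Φ (2 * R))))) :=
    le_mul_of_one_le_left (by positivity) hN'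
  calc f a - f b ≤ N * (h / R * (2 * (c₀ * (1 + Φ (2 * R))))) := by linarith
    _ = _ := by ring

/-- local Lipschitz-type estimate for integrands with nonstandard growth. -/
theorem stmt0 {N : ℕ} (hN : 1 ≤ N) {Ω : Type*} [MeasurableSpace Ω] (μ : Measure Ω)
    (Φ : ℝ → ℝ) (hΦ : IsYoung Φ) (c₀ : ℝ) (hc₀ : 0 < c₀)
    (g : (Fin N → ℝ) → Ω → (Fin N → ℝ) → (Fin N → ℝ) → ℝ)
    (hconv : ∀ᵐ p ∂(μ.prod (volume : Measure (Fin N → ℝ))),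
      ∀ x : Fin N → ℝ, StrictConvexOn ℝ Set.univ (g x p.1 p.2))
    (hbound : ∀ᵐ p ∂(μ.prod (volume : Measure (Fin N → ℝ))),
      ∀ x lam : Fin N → ℝ, |g x p.1 p.2 lam| ≤ c₀ * (1 + Φ (enorm2 lam))) :
    ∀ᵐ p ∂(μ.prod (volume : Measure (Fin N → ℝ))),
      ∀ x lam nu : Fin N → ℝ,
        |g x p.1 p.2 lam - g x p.1 p.2 nu| ≤
          (2 * (N : ℝ) * c₀) *
            ((1 + Φ (2 * (1 + enorm2 lam + enorm2 nu))) / (1 + enorm2 lam + enorm2 nu)) *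
            enorm2 (lam - nu) := by
  filter_upwards [hconv, hbound] with p hp hq x lam nu
  have h1 := one_side_aux hN hΦ hc₀ (g x p.1 p.2) (hp x).convexOn (hq x) lam nu _ rfl
  have h2 := one_side_aux hN hΦ hc₀ (g x p.1 p.2) (hp x).convexOn (hq x) nu lam
    (1 + enorm2 lam + enorm2 nu) (by ring)
  have h3 : enorm2 (nu - lam) = enorm2 (lam - nu) := by
    simp only [enorm2_eq_aux, WithLp.toLp_sub]
    exact norm_sub_rev _ _
  rw [h3] at h2
  exact abs_le.2 ⟨by linarith, h1⟩
end
end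

section
/- Let Φ be a Young function such that Φ and its conjugate Φ̃ are of class Δ₂, and let {T(x)}_{x∈ℝ^N} be an N-dimensional dynamical system on Ω. Let f(x,ω,y) = Σ_{i=1}^m φ_i(x)ψ_i(ω)g_i(y), where φ_i ∈ C_c^∞(Q), ψ_i : Ω → ℝ is bounded measurable, and g_i : ℝ^N → ℝ is continuous and ℤ^N-periodic. For ε > 0 define f_T^ε(x,ω) = f(x, T(x/ε)ω, x/ε²) on Q×Ω. Then lim_{ε→0⁺} ‖f_T^ε‖_{Φ,Q×Ω} = ‖f‖_{Φ,Q×Ω×Y}. -/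
open MeasureTheory Filter Topology ENNReal

noncomputable section

theorem aux_lux {X X' ι : Type*} [MeasurableSpace X] [MeasurableSpace X'] (Φ : ℝ → ℝ)
    (hΦ : IsYoung Φ) (ν : Measure X) (ν' : Measure X') (u : ι → X → ℝ) (u' : X' → ℝ)
    (l : Filter ι)
    (h : ∀ δ : ℝ, 0 < δ → Tendsto (fun i => ∫⁻ x, ENNReal.ofReal (Φ (|u i x| / δ)) ∂ν) l
      (nhds (∫⁻ x, ENNReal.ofReal (Φ (|u' x| / δ)) ∂ν'))) :
    Tendsto (fun i => luxNorm Φ ν (u i)) l (nhds (luxNorm Φ ν' u')) := by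
  obtain ⟨_, hconv, h0, _, hnn, _, _⟩ := hΦ
  have hscale : ∀ t c : ℝ, 0 ≤ t → 0 ≤ c → c ≤ 1 → Φ (c * t) ≤ c * Φ t := by
    intro t c ht hc hc1
    have := hconv.2 (x := t) (y := 0) ht (le_refl (0:ℝ)) hc (sub_nonneg.2 hc1) (by ring)
    simpa [h0] using this
  have hmod : ∀ (a δ δ' : ℝ), 0 < δ' → δ' ≤ δ →
      ENNReal.ofReal (Φ (|a| / δ)) ≤ ENNReal.ofReal (δ' / δ) * ENNReal.ofReal (Φ (|a| / δ')) := by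
    intro a δ δ' h1 h2
    have hδ : 0 < δ := h1.trans_le h2
    rw [← ENNReal.ofReal_mul (by positivity)]
    apply ENNReal.ofReal_le_ofReal
    have := hscale (|a| / δ') (δ' / δ) (by positivity) (by positivity) ((div_le_one hδ).2 h2)
    convert this using 2
    field_simp
  rw [tendsto_order]
  constructor
  · intro a ha
    obtain ⟨b, hab, hb⟩ := exists_between ha
    have hbt : b ≠ ⊤ := hb.ne_top
    have hb0 : 0 < b.toReal := ENNReal.toReal_pos (pos_of_gt hab).ne' hbt
    have hI : 1 < ∫⁻ x, ENNReal.ofReal (Φ (|u' x| / b.toReal)) ∂ν' := by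
      by_contra hcon
      rw [not_lt] at hcon
      have : luxNorm Φ ν' u' ≤ b :=
        sInf_le ⟨b.toReal, hb0, (ENNReal.ofReal_toReal hbt).symm, hcon⟩
      exact absurd hb (not_lt.2 this)
    filter_upwards [(h _ hb0).eventually (lt_mem_nhds hI)] with i hi
    refine hab.trans_le (le_sInf ?_)
    rintro d ⟨δ, hδ, rfl, hle⟩
    by_contra hcon
    rw [not_le] at hcon
    have hlt : δ ≤ b.toReal := by
      rw [← ENNReal.ofReal_toReal hbt] at hcon
      exact ((ENNReal.ofReal_lt_ofReal_iff hb0).1 hcon).le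
    refine absurd hi (not_lt.2 (le_trans ?_ hle))
    apply lintegral_mono
    intro x
    refine (hmod (u i x) b.toReal δ hδ hlt).trans ?_
    refine (mul_le_mul_left (ENNReal.ofReal_le_one.2 ((div_le_one hb0).2 hlt)) _).trans ?_
    rw [one_mul]
  · intro a ha
    obtain ⟨b, hb, hba⟩ := exists_between ha
    have hbt : b ≠ ⊤ := hba.ne_top
    obtain ⟨d, ⟨δ', hδ', rfl, hle⟩, hdb⟩ := sInf_lt_iff.1 hb
    have hb0 : 0 < b.toReal := ENNReal.toReal_pos (pos_of_gt hdb).ne' hbt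
    have hlt : δ' < b.toReal := by
      rw [← ENNReal.ofReal_toReal hbt] at hdb
      exact ((ENNReal.ofReal_lt_ofReal_iff hb0).1 hdb)
    have hI : ∫⁻ x, ENNReal.ofReal (Φ (|u' x| / b.toReal)) ∂ν' < 1 := by
      calc _ ≤ ∫⁻ x, ENNReal.ofReal (δ' / b.toReal) * ENNReal.ofReal (Φ (|u' x| / δ')) ∂ν' :=
            lintegral_mono fun x => hmod _ _ _ hδ' hlt.le
        _ = ENNReal.ofReal (δ' / b.toReal) * ∫⁻ x, ENNReal.ofReal (Φ (|u' x| / δ')) ∂ν' :=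
            lintegral_const_mul' _ _ ENNReal.ofReal_ne_top
        _ ≤ ENNReal.ofReal (δ' / b.toReal) * 1 := by gcongr
        _ < 1 := by
            rw [mul_one, ENNReal.ofReal_lt_one]
            exact (div_lt_one hb0).2 hlt
    filter_upwards [(h _ hb0).eventually (gt_mem_nhds hI)] with i hi
    refine lt_of_le_of_lt (sInf_le ?_) hba
    exact ⟨b.toReal, hb0, (ENNReal.ofReal_toReal hbt).symm, le_of_lt hi⟩

theorem aux_per {N : ℕ} (k : (Fin N → ℝ) → ℝ≥0∞)
    (hk : ∀ (y : Fin N → ℝ) (j : Fin N → ℤ), k (y + fun i => (j i : ℝ)) = k y)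
    (a : Fin N → ℝ) :
    ∫⁻ z in Ycube N, k (a + z) = ∫⁻ z in Ycube N, k z := by
  have hD : (ZSpan.fundamentalDomain (Pi.basisFun ℝ (Fin N)) : Set (Fin N → ℝ))
      =ᵐ[volume] Ycube N := by
    rw [ZSpan.fundamentalDomain_pi_basisFun]
    exact Measure.univ_pi_Ico_ae_eq_Icc
  rw [← Measure.restrict_congr_set hD]
  have hfd := ZSpan.isAddFundamentalDomain' (Pi.basisFun ℝ (Fin N)) volume
  have hfd2 := hfd.vadd_of_comm a
  have h1 := (measurePreserving_add_left (volume : Measure (Fin N → ℝ)) a).setLIntegral_comp_emb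
    (measurableEmbedding_addLeft a) k (ZSpan.fundamentalDomain (Pi.basisFun ℝ (Fin N)))
  rw [h1]
  have : Countable (Submodule.span ℤ (Set.range (Pi.basisFun ℝ (Fin N)))).toAddSubgroup :=
    inferInstanceAs (Countable (Submodule.span ℤ (Set.range (Pi.basisFun ℝ (Fin N)))))
  refine hfd2.setLIntegral_eq hfd k ?_
  rintro ⟨v, hv⟩ x
  have hv' : v ∈ Submodule.span ℤ (Set.range (Pi.basisFun ℝ (Fin N))) := hv
  rw [Module.Basis.mem_span_iff_repr_mem] at hv'
  choose j hj using hv'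
  have : v = fun i => (j i : ℝ) := by
    ext i
    simpa using (hj i).symm
  change k (v + x) = k x
  rw [add_comm, this, hk]

theorem aux_core {N : ℕ} (G : (Fin N → ℝ) → (Fin N → ℝ) → ℝ≥0∞)
    (hGm : Measurable (Function.uncurry G))
    (hper : ∀ x (y : Fin N → ℝ) (j : Fin N → ℤ), G x (y + fun i => (j i : ℝ)) = G x y)
    (B : Set (Fin N → ℝ)) (hB : MeasurableSet B) (hBf : volume B ≠ ⊤)
    (hG : ∀ e : ℝ, 0 < e → ∃ η₀ : ℝ, 0 < η₀ ∧ ∀ η : ℝ, 0 < η → η < η₀ → ∀ z ∈ Ycube N,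
      ∀ x y, G (x + η • z) y ≤ G x y + B.indicator (fun _ => ENNReal.ofReal e) x ∧
        G x y ≤ G (x + η • z) y + B.indicator (fun _ => ENNReal.ofReal e) x) :
    Tendsto (fun η : ℝ => ∫⁻ x, G x (η⁻¹ • x)) (nhdsWithin 0 (Set.Ioi 0))
      (nhds (∫⁻ x, ∫⁻ z in Ycube N, G x z)) := by
  have hY : volume (Ycube N) = 1 := by
    simp [Ycube, Real.volume_Icc_pi]
  have hYm : MeasurableSet (Ycube N) := measurableSet_Icc
  have hI : ∀ η : ℝ, ∫⁻ x, ∫⁻ z in Ycube N, G x (η⁻¹ • x + z) =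
      ∫⁻ x, ∫⁻ z in Ycube N, G x z := fun η =>
    lintegral_congr fun x => aux_per (G x) (hper x) _
  have hA : ∀ η : ℝ, 0 < η → ∫⁻ x, G x (η⁻¹ • x) =
      ∫⁻ x, ∫⁻ z in Ycube N, G (x + η • z) (η⁻¹ • x + z) := by
    intro η hη
    rw [lintegral_lintegral_swap]
    · have : ∀ z : Fin N → ℝ, ∫⁻ x, G (x + η • z) (η⁻¹ • x + z) = ∫⁻ x, G x (η⁻¹ • x) := by
        intro z
        rw [← lintegral_add_right_eq_self (fun x => G x (η⁻¹ • x)) (η • z)]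
        refine lintegral_congr fun x => ?_
        rw [smul_add, inv_smul_smul₀ hη.ne']
      simp [this, hY]
    · refine Measurable.aemeasurable ?_
      exact hGm.comp (f := fun p : (Fin N → ℝ) × (Fin N → ℝ) =>
        (p.1 + η • p.2, η⁻¹ • p.1 + p.2)) (by fun_prop)
  have hc : ∀ e : ℝ, ∫⁻ x : Fin N → ℝ, ∫⁻ z in Ycube N,
      B.indicator (fun _ => ENNReal.ofReal e) x = ENNReal.ofReal e * volume B := by
    intro e
    simp [hY, lintegral_indicator hB]
  have hmeas : ∀ e : ℝ, Measurable fun p : (Fin N → ℝ) =>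
      B.indicator (fun _ => ENNReal.ofReal e) p := fun e => measurable_const.indicator hB
  have key : ∀ e : ℝ, 0 < e → ∀ᶠ η in nhdsWithin (0:ℝ) (Set.Ioi 0),
      ∫⁻ x, G x (η⁻¹ • x) ≤ (∫⁻ x, ∫⁻ z in Ycube N, G x z) + ENNReal.ofReal e * volume B ∧
      (∫⁻ x, ∫⁻ z in Ycube N, G x z) ≤ (∫⁻ x, G x (η⁻¹ • x)) + ENNReal.ofReal e * volume B := by
    intro e he
    obtain ⟨η₀, h0, h⟩ := hG e he
    filter_upwards [Ioo_mem_nhdsGT h0] with η hη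
    have hadd : ∀ K : (Fin N → ℝ) → (Fin N → ℝ) → ℝ≥0∞,
        ∫⁻ x, ∫⁻ z in Ycube N, (K x z + B.indicator (fun _ => ENNReal.ofReal e) x) =
        (∫⁻ x, ∫⁻ z in Ycube N, K x z) + ENNReal.ofReal e * volume B := by
      intro K
      rw [← hc e, ← lintegral_add_right]
      · refine lintegral_congr fun x => ?_
        rw [lintegral_add_right _ measurable_const]
      · simpa [hY] using hmeas e
    constructor
    · rw [hA η hη.1, ← hI η, ← hadd]
      exact lintegral_mono fun x => setLIntegral_mono' hYm fun z hz =>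
        (h η hη.1 hη.2 z hz x _).1
    · rw [hA η hη.1, ← hI η, ← hadd]
      exact lintegral_mono fun x => setLIntegral_mono' hYm fun z hz =>
        (h η hη.1 hη.2 z hz x _).2
  have hsmall : ∀ c : ℝ≥0∞, 0 < c → ∃ e : ℝ, 0 < e ∧ ENNReal.ofReal e * volume B ≤ c := by
    intro c hc
    have ht : Tendsto (fun e : ℝ => ENNReal.ofReal e * volume B) (nhdsWithin 0 (Set.Ioi 0))
        (nhds 0) := by
      have h1 : Tendsto (fun e : ℝ => ENNReal.ofReal e) (nhdsWithin 0 (Set.Ioi 0)) (nhds 0) := by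
        have := (ENNReal.continuous_ofReal.tendsto 0).mono_left
          (nhdsWithin_le_nhds (s := Set.Ioi (0:ℝ)))
        simpa using this
      simpa using ENNReal.Tendsto.mul_const h1 (Or.inr hBf)
    obtain ⟨e, he, he'⟩ := ((ht.eventually (gt_mem_nhds hc)).and self_mem_nhdsWithin).exists
    exact ⟨e, he', he.le⟩
  by_cases hfin : (∫⁻ x, ∫⁻ z in Ycube N, G x z) = ⊤
  · refine tendsto_const_nhds.congr' ?_
    filter_upwards [key 1 one_pos] with η hη
    have h2 := hη.2
    rw [hfin] at h2 ⊢
    have h3 := top_le_iff.1 h2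
    rcases ENNReal.add_eq_top.1 h3 with h4 | h4
    · exact h4.symm
    · exact absurd h4 (ENNReal.mul_ne_top ENNReal.ofReal_ne_top hBf)
  · rw [ENNReal.tendsto_nhds hfin]
    intro c hc
    obtain ⟨e, he, hec⟩ := hsmall c hc
    filter_upwards [key e he] with η hη
    refine ⟨tsub_le_iff_right.2 (hη.2.trans ?_), hη.1.trans ?_⟩ <;> gcongr

theorem aux_bdd {N : ℕ} (g : (Fin N → ℝ) → ℝ) (hc : Continuous g) (hp : ZPeriodic g) :
    ∃ C : ℝ, ∀ y, |g y| ≤ C := by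
  obtain ⟨C, hC⟩ := (isCompact_Icc (a := (0 : Fin N → ℝ)) (b := 1)).exists_bound_of_continuousOn
    hc.continuousOn
  refine ⟨C, fun y => ?_⟩
  have h1 : y = (fun i => Int.fract (y i)) + fun i => ((⌊y i⌋ : ℤ) : ℝ) := by
    ext i
    exact (Int.fract_add_floor (y i)).symm
  rw [h1, hp]
  exact hC _ ⟨fun i => Int.fract_nonneg _, fun i => (Int.fract_lt_one _).le⟩

theorem aux_unif {m : ℕ} (h : ℝ → ℝ) (hh : Continuous h) (C : ℝ) (e : ℝ) (he : 0 < e) :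
    ∃ d > 0, ∀ a a' b c : Fin m → ℝ, (∀ i, |a i| ≤ C) → (∀ i, |a' i| ≤ C) → (∀ i, |b i| ≤ C) →
      (∀ i, |c i| ≤ C) → dist a a' < d →
      |h (∑ i, a i * b i * c i) - h (∑ i, a' i * b i * c i)| ≤ e := by
  let S : Set (Fin m → ℝ) := Set.pi Set.univ fun _ => Set.Icc (-C) C
  have hS : IsCompact S := isCompact_univ_pi fun _ => isCompact_Icc
  have hm : ∀ a : Fin m → ℝ, (∀ i, |a i| ≤ C) → a ∈ S := fun a ha i _ => abs_le.1 (ha i)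
  have hu := (hS.prod (hS.prod hS)).uniformContinuousOn_of_continuous
    (f := fun p : (Fin m → ℝ) × (Fin m → ℝ) × (Fin m → ℝ) => h (∑ i, p.1 i * p.2.1 i * p.2.2 i))
    (by fun_prop)
  rw [Metric.uniformContinuousOn_iff] at hu
  obtain ⟨d, hd, H⟩ := hu e he
  refine ⟨d, hd, fun a a' b c ha ha' hb hc hdist => ?_⟩
  have := H (a, b, c) ⟨hm a ha, hm b hb, hm c hc⟩ (a', b, c) ⟨hm a' ha', hm b hb, hm c hc⟩
    (by simpa [Prod.dist_eq, hd] using hdist)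
  exact this.le

theorem aux_modular {N : ℕ} {Ω : Type*} [MeasurableSpace Ω] (μ : Measure Ω)
    [IsProbabilityMeasure μ] (h : ℝ → ℝ) (hh : Continuous h) (h0 : h 0 = 0)
    (T : (Fin N → ℝ) → Ω → Ω) (hT : IsDynSys μ T)
    (Q : Set (Fin N → ℝ)) (hQb : Bornology.IsBounded Q)
    (m : ℕ) (φ : Fin m → (Fin N → ℝ) → ℝ) (ψ : Fin m → Ω → ℝ)
    (g : Fin m → (Fin N → ℝ) → ℝ)
    (hφ : ∀ i, ContDiff ℝ (⊤ : ℕ∞) (φ i) ∧ HasCompactSupport (φ i) ∧ tsupport (φ i) ⊆ Q)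
    (hψ : ∀ i, Measurable (ψ i) ∧ ∃ C : ℝ, ∀ ω, |ψ i ω| ≤ C)
    (hg : ∀ i, Continuous (g i) ∧ ZPeriodic (g i)) :
    Tendsto
      (fun ε : ℝ => ∫⁻ p, ENNReal.ofReal (h (∑ i, φ i p.1 * ψ i (T (ε⁻¹ • p.1) p.2) *
        g i ((ε ^ 2)⁻¹ • p.1))) ∂((volume.restrict Q).prod μ))
      (nhdsWithin 0 (Set.Ioi 0))
      (nhds (∫⁻ p, ENNReal.ofReal (h (∑ i, φ i p.1.1 * ψ i p.1.2 * g i p.2))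
        ∂(((volume.restrict Q).prod μ).prod (volume.restrict (Ycube N))))) := by
  have hφc : ∀ i, Continuous (φ i) := fun i => (hφ i).1.continuous
  have hgc : ∀ i, Continuous (g i) := fun i => (hg i).1
  have hψm : ∀ i, Measurable (ψ i) := fun i => (hψ i).1
  have hTm := hT.2.2.2
  have hφ0 : ∀ x, x ∉ Q → ∀ i, φ i x = 0 := fun x hx i =>
    image_eq_zero_of_notMem_tsupport fun hx' => hx ((hφ i).2.2 hx')
  let F : (Fin N → ℝ) → Ω → (Fin N → ℝ) → ℝ≥0∞ := fun x ω y =>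
    ENNReal.ofReal (h (∑ i, φ i x * ψ i ω * g i y))
  have hFm : Measurable fun p : (Fin N → ℝ) × Ω × (Fin N → ℝ) => F p.1 p.2.1 p.2.2 := by
    refine ENNReal.measurable_ofReal.comp (hh.measurable.comp ?_)
    refine Finset.measurable_fun_sum _ fun i _ => ?_
    exact (((hφc i).measurable.comp measurable_fst).mul
      ((hψm i).comp measurable_snd.fst)).mul ((hgc i).measurable.comp measurable_snd.snd)
  have hF0 : ∀ x, x ∉ Q → ∀ ω y, F x ω y = 0 := by
    intro x hx ω y
    simp [F, hφ0 x hx, h0]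
  let G : (Fin N → ℝ) → (Fin N → ℝ) → ℝ≥0∞ := fun x y => ∫⁻ ω, F x ω y ∂μ
  have hGm : Measurable (Function.uncurry G) := by
    refine Measurable.lintegral_prod_right'
      (f := fun q : ((Fin N → ℝ) × (Fin N → ℝ)) × Ω => F q.1.1 q.2 q.1.2) ?_
    exact hFm.comp (f := fun q : ((Fin N → ℝ) × (Fin N → ℝ)) × Ω => (q.1.1, q.2, q.1.2))
      (by fun_prop)
  have hG0 : ∀ x, x ∉ Q → ∀ y, G x y = 0 := by
    intro x hx y
    simp [G, hF0 x hx]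
  have hper : ∀ x (y : Fin N → ℝ) (j : Fin N → ℤ), G x (y + fun i => (j i : ℝ)) = G x y := by
    intro x y j
    simp only [G, F]
    simp_rw [fun i => (hg i).2 y j]
  -- left side
  have hL : ∀ ε : ℝ, ∫⁻ p, ENNReal.ofReal (h (∑ i, φ i p.1 * ψ i (T (ε⁻¹ • p.1) p.2) *
        g i ((ε ^ 2)⁻¹ • p.1))) ∂((volume.restrict Q).prod μ) =
        ∫⁻ x, G x ((ε ^ 2)⁻¹ • x) := by
    intro ε
    change ∫⁻ p, F p.1 (T (ε⁻¹ • p.1) p.2) ((ε ^ 2)⁻¹ • p.1) ∂((volume.restrict Q).prod μ) = _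
    rw [lintegral_prod]
    · rw [← setLIntegral_eq_of_support_subset (s := Q) (f := fun x => G x ((ε ^ 2)⁻¹ • x))]
      · refine lintegral_congr fun x => ?_
        refine (hT.2.2.1 (ε⁻¹ • x)).lintegral_comp
          (f := fun ω => F x ω ((ε ^ 2)⁻¹ • x)) ?_
        exact hFm.comp (f := fun ω => (x, ω, (ε ^ 2)⁻¹ • x)) (by fun_prop)
      · intro x hx
        by_contra hxQ
        exact hx (hG0 x hxQ _)
    · refine Measurable.aemeasurable ?_
      refine hFm.comp (f := fun p : (Fin N → ℝ) × Ω =>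
        (p.1, T (ε⁻¹ • p.1) p.2, (ε ^ 2)⁻¹ • p.1)) ?_
      refine measurable_fst.prodMk (Measurable.prodMk ?_ (by fun_prop))
      exact hTm.comp (f := fun p : (Fin N → ℝ) × Ω => (ε⁻¹ • p.1, p.2)) (by fun_prop)
  have hR : ∫⁻ p, ENNReal.ofReal (h (∑ i, φ i p.1.1 * ψ i p.1.2 * g i p.2))
        ∂(((volume.restrict Q).prod μ).prod (volume.restrict (Ycube N))) =
        ∫⁻ x, ∫⁻ z in Ycube N, G x z := by
    change ∫⁻ p, F p.1.1 p.1.2 p.2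
        ∂(((volume.restrict Q).prod μ).prod (volume.restrict (Ycube N))) = _
    have hFm' : Measurable fun p : ((Fin N → ℝ) × Ω) × (Fin N → ℝ) => F p.1.1 p.1.2 p.2 :=
      hFm.comp (f := fun p : ((Fin N → ℝ) × Ω) × (Fin N → ℝ) => (p.1.1, p.1.2, p.2))
        (by fun_prop)
    rw [lintegral_prod _ hFm'.aemeasurable, lintegral_prod _ hFm'.lintegral_prod_right'.aemeasurable]
    rw [← setLIntegral_eq_of_support_subset (s := Q) (f := fun x => ∫⁻ z in Ycube N, G x z)]
    · refine lintegral_congr fun x => ?_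
      refine lintegral_lintegral_swap ?_
      exact (hFm.comp (f := fun p : Ω × (Fin N → ℝ) => (x, p.1, p.2))
        (by fun_prop)).aemeasurable
    · intro x hx
      by_contra hxQ
      apply hx
      simp [hG0 x hxQ]
  simp_rw [hL]
  rw [hR]
  -- uniform bound
  have hbφ : ∀ i, ∃ C : ℝ, ∀ x, |φ i x| ≤ C := fun i => (hφ i).2.1.exists_bound_of_continuous (hφc i)
  choose C1 hC1 using hbφ
  choose C2 hC2 using fun i => (hψ i).2
  choose C3 hC3 using fun i => aux_bdd (g i) (hg i).1 (hg i).2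
  let C : ℝ := ∑ i, (|C1 i| + |C2 i| + |C3 i|)
  have hCi : ∀ i, |C1 i| + |C2 i| + |C3 i| ≤ C := fun i =>
    Finset.single_le_sum (f := fun i => |C1 i| + |C2 i| + |C3 i|)
      (fun j _ => by positivity) (Finset.mem_univ i)
  have hD1 : ∀ x i, |φ i x| ≤ C := fun x i => by
    linarith [hC1 i x, hCi i, le_abs_self (C1 i), abs_nonneg (C2 i), abs_nonneg (C3 i)]
  have hD2 : ∀ x i, |ψ i x| ≤ C := fun x i => by
    linarith [hC2 i x, hCi i, le_abs_self (C2 i), abs_nonneg (C1 i), abs_nonneg (C3 i)]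
  have hD3 : ∀ x i, |g i x| ≤ C := fun x i => by
    linarith [hC3 i x, hCi i, le_abs_self (C3 i), abs_nonneg (C2 i), abs_nonneg (C1 i)]
  obtain ⟨R, hR0⟩ := hQb.subset_closedBall 0
  have hφu : UniformContinuous fun x i => φ i x :=
    uniformContinuous_pi.2 fun i => (hφ i).2.1.uniformContinuous_of_continuous (hφc i)
  have hcore := aux_core G hGm hper (Metric.closedBall 0 (R + 1)) measurableSet_closedBall
    (measure_closedBall_lt_top).ne ?_
  · have hsq : Tendsto (fun ε : ℝ => ε ^ 2) (nhdsWithin 0 (Set.Ioi 0))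
        (nhdsWithin 0 (Set.Ioi 0)) := by
      refine tendsto_nhdsWithin_iff.2 ⟨?_, ?_⟩
      · have : Tendsto (fun ε : ℝ => ε ^ 2) (nhds 0) (nhds (0 ^ 2)) :=
          (continuous_pow 2).tendsto 0
        rw [zero_pow two_ne_zero] at this
        exact this.mono_left nhdsWithin_le_nhds
      · filter_upwards [self_mem_nhdsWithin] with ε hε
        exact pow_pos (Set.mem_Ioi.1 hε) 2
    exact hcore.comp hsq
  · intro e he
    obtain ⟨d, hd, Hd⟩ := aux_unif (m := m) h hh C e he
    obtain ⟨r, hr, Hr⟩ := Metric.uniformContinuous_iff.1 hφu d hd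
    refine ⟨min r 1, lt_min hr one_pos, fun η hη hη2 z hz x y => ?_⟩
    have hz1 : ‖z‖ ≤ 1 := by
      refine (pi_norm_le_iff_of_nonneg zero_le_one).2 fun i => ?_
      rw [Real.norm_eq_abs, abs_of_nonneg (hz.1 i)]
      exact hz.2 i
    have hnz : ‖η • z‖ ≤ η := by
      rw [norm_smul, Real.norm_eq_abs, abs_of_pos hη]
      nlinarith
    by_cases hxB : x ∈ Metric.closedBall (0 : Fin N → ℝ) (R + 1)
    · have hdist : dist (x + η • z) x < r := by
        rw [dist_eq_norm, add_sub_cancel_left]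
        exact hnz.trans_lt (hη2.trans_le (min_le_left _ _))
      have H := fun ω => Hd _ _ (fun i => ψ i ω) (fun i => g i y) (hD1 (x + η • z)) (hD1 x)
        (hD2 ω) (hD3 y) (Hr hdist)
      rw [Set.indicator_of_mem hxB]
      have hint : ∀ K : Ω → ℝ≥0∞, (∫⁻ ω, K ω ∂μ) + ENNReal.ofReal e =
          ∫⁻ ω, (K ω + ENNReal.ofReal e) ∂μ := by
        intro K
        rw [lintegral_add_right _ measurable_const]
        simp
      constructor
      · simp only [G]
        rw [hint]
        refine lintegral_mono fun ω => ?_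
        refine (ENNReal.ofReal_le_ofReal ?_).trans ENNReal.ofReal_add_le
        linarith [(abs_le.1 (H ω)).2]
      · simp only [G]
        rw [hint]
        refine lintegral_mono fun ω => ?_
        refine (ENNReal.ofReal_le_ofReal ?_).trans ENNReal.ofReal_add_le
        linarith [(abs_le.1 (H ω)).1]
    · have hx : R + 1 < ‖x‖ := by
        rw [mem_closedBall_zero_iff, not_le] at hxB
        exact hxB
      have hx1 : x ∉ Q := fun hxQ => by
        have := mem_closedBall_zero_iff.1 (hR0 hxQ)
        linarith
      have hx2 : x + η • z ∉ Q := fun hxQ => by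
        have h1 := mem_closedBall_zero_iff.1 (hR0 hxQ)
        have h2 : ‖x‖ ≤ ‖x + η • z‖ + ‖η • z‖ := by
          simpa using norm_sub_le (x + η • z) (η • z)
        have h3 := hη2.trans_le (min_le_right _ _)
        linarith
      rw [hG0 _ hx1, hG0 _ hx2]
      simp

/-- convergence of Luxemburg norms of oscillating test functions. -/
theorem stmt2 {N : ℕ} (hN : 1 ≤ N) {Ω : Type*} [MeasurableSpace Ω] (μ : Measure Ω)
    [IsProbabilityMeasure μ]
    (Φ : ℝ → ℝ) (hΦ : IsYoung Φ) (hΦ2 : Delta2 Φ) (hΦc2 : Delta2 (conjY Φ))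
    (T : (Fin N → ℝ) → Ω → Ω) (hT : IsDynSys μ T)
    (Q : Set (Fin N → ℝ)) (hQo : IsOpen Q) (hQb : Bornology.IsBounded Q)
    (m : ℕ) (φ : Fin m → (Fin N → ℝ) → ℝ) (ψ : Fin m → Ω → ℝ)
    (g : Fin m → (Fin N → ℝ) → ℝ)
    (hφ : ∀ i, ContDiff ℝ (⊤ : ℕ∞) (φ i) ∧ HasCompactSupport (φ i) ∧ tsupport (φ i) ⊆ Q)
    (hψ : ∀ i, Measurable (ψ i) ∧ ∃ C : ℝ, ∀ ω, |ψ i ω| ≤ C)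
    (hg : ∀ i, Continuous (g i) ∧ ZPeriodic (g i)) :
    Tendsto
      (fun ε : ℝ =>
        luxNorm Φ ((volume.restrict Q).prod μ)
          (fun p => ∑ i, φ i p.1 * ψ i (T (ε⁻¹ • p.1) p.2) * g i ((ε ^ 2)⁻¹ • p.1)))
      (nhdsWithin 0 (Set.Ioi 0))
      (nhds (luxNorm Φ (((volume.restrict Q).prod μ).prod (volume.restrict (Ycube N)))
        (fun p => ∑ i, φ i p.1.1 * ψ i p.1.2 * g i p.2))) := by
  refine aux_lux Φ hΦ _ _ _ _ _ fun δ hδ => ?_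
  refine aux_modular μ (fun s => Φ (|s| / δ)) ?_ (by simp [hΦ.2.2.1]) T hT Q hQb m φ ψ g hφ hψ hg
  exact hΦ.1.comp_continuous (by fun_prop) fun s => div_nonneg (abs_nonneg s) hδ.le
end
end

section
/- Let Φ be a Young function such that Φ and its conjugate Φ̃ are of class Δ₂, assume ℳ is countably generated modulo μ-null sets, let {T(x)}_{x∈ℝ^N} be an N-dimensional dynamical system on Ω, let (ε_k) ⊆ (0,1] with ε_k → 0, and let (u_k) be a sequence of measurable functions on Q×Ω, extended by 0 to ℝ^N×Ω, with sup_k ‖u_k‖_{Φ,Q×Ω} < ∞, which weakly stochastically 2-scale converges to u₀. Fix r > 0 and let B_r be the open Euclidean ball of ℝ^N centered at the origin with radius r. Define v_k(x,ω) = ∫_{B_r} u_k(x + ε_k²ρ, ω) dρ for (x,ω) ∈ Q×Ω. Then sup_k ‖v_k‖_{Φ,Q×Ω} < ∞ and (v_k) weakly stochastically 2-scale converges to v₀, where v₀(x,ω,y) = ∫_{B_r} u₀(x, ω, y+ρ) dρ. -/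
open MeasureTheory Filter Topology ENNReal

noncomputable section

lemma IsYoung.mono {Φ : ℝ → ℝ} (h : IsYoung Φ) {s t : ℝ} (hs : 0 ≤ s) (hst : s ≤ t) :
    Φ s ≤ Φ t := by
  obtain ⟨_, hc, h0, _, hnn, _⟩ := h
  rcases hs.eq_or_lt with rfl | hs'
  · rw [h0]; exact hnn t hst
  have ht : 0 < t := lt_of_lt_of_le hs' hst
  have := hc.2 (show (0:ℝ) ∈ Set.Ici 0 by simp) (show t ∈ Set.Ici 0 from ht.le) (show 0 ≤ 1 - s / t from
    by rw [sub_nonneg, div_le_one ht]; exact hst) (show 0 ≤ s / t by positivity) (by ring)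
  simp only [smul_eq_mul, mul_zero, zero_add, h0] at this
  rw [div_mul_cancel₀ _ ht.ne'] at this
  refine this.trans ?_
  have h1 : s / t ≤ 1 := by rw [div_le_one ht]; exact hst
  nlinarith [hnn t ht.le]

lemma IsYoung.cont {Φ : ℝ → ℝ} (h : IsYoung Φ) : Continuous (fun t => Φ |t|) :=
  h.1.comp_continuous continuous_abs (fun t => abs_nonneg t)

lemma IsYoung.meas {Φ : ℝ → ℝ} (h : IsYoung Φ) {X : Type*} [MeasurableSpace X] {u : X → ℝ}
    (hu : Measurable u) {δ : ℝ} (hδ : 0 < δ) : Measurable (fun x => Φ (|u x| / δ)) := by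
  have : (fun x => Φ (|u x| / δ)) = fun x => (fun t => Φ |t|) (u x / δ) := by
    ext x; simp [abs_div, abs_of_pos hδ]
  rw [this]
  exact h.cont.measurable.comp (hu.div_const δ)

lemma lux_bound {Φ : ℝ → ℝ} (h : IsYoung Φ) {X : Type*} [MeasurableSpace X] {ν : Measure X}
    {u : X → ℝ} {M : ℝ} (hl : luxNorm Φ ν u < ENNReal.ofReal M) :
    ∫⁻ x, ENNReal.ofReal (Φ (|u x| / M)) ∂ν ≤ 1 := by
  obtain ⟨d, ⟨δ, hδ, rfl, hi⟩, hd⟩ := sInf_lt_iff.1 hl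
  have hM : δ < M := (ENNReal.ofReal_lt_ofReal_iff_of_nonneg hδ.le).1 hd
  refine le_trans (lintegral_mono fun x => ?_) hi
  apply ENNReal.ofReal_le_ofReal
  apply h.mono
  · have := hδ.trans hM; positivity
  · gcongr

lemma superlin {Φ : ℝ → ℝ} (h : IsYoung Φ) {M : ℝ} (hM : 0 < M) :
    ∃ R : ℝ, 0 ≤ R ∧ ∀ t, 0 ≤ t → t ≤ R + Φ t / M := by
  obtain ⟨_, _, _, _, hnn, _, ht⟩ := h
  obtain ⟨R, hR⟩ := (eventually_atTop.1 (ht.eventually_ge_atTop M))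
  refine ⟨max R 0, le_max_right _ _, fun t h0 => ?_⟩
  by_cases hc : t ≤ max R 0
  · have := hnn t h0
    have : 0 ≤ Φ t / M := by positivity
    linarith
  · push Not at hc
    have h1 := hR t ((le_max_left R 0).trans hc.le)
    have htp : 0 < t := lt_of_le_of_lt (le_max_right _ _) hc
    rw [le_div_iff₀ htp] at h1
    have : t ≤ Φ t / M := by rw [le_div_iff₀ hM]; linarith
    linarith [le_max_right R 0]

lemma lint_bound {Φ : ℝ → ℝ} (hΦ : IsYoung Φ) {X : Type*} [MeasurableSpace X] {ν : Measure X}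
    {u h : X → ℝ} {δ : ℝ} (hδ : 0 < δ) (hu : Measurable u) (hh : Measurable h)
    (hi : ∫⁻ x, ENNReal.ofReal (Φ (|u x| / δ)) ∂ν ≤ 1) {C : ℝ} (hC : ∀ x, |h x| ≤ C)
    {M R : ℝ} (hM : 0 < M) (hR : 0 ≤ R) (hRM : ∀ t, 0 ≤ t → t ≤ R + Φ t / M) :
    ∫⁻ x, ‖u x * h x‖ₑ ∂ν ≤
      ENNReal.ofReal (δ * R) * ∫⁻ x, ‖h x‖ₑ ∂ν + ENNReal.ofReal (δ * C / M) := by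
  have hnn : ∀ x, 0 ≤ Φ (|u x| / δ) := fun x => hΦ.2.2.2.2.1 _ (by positivity)
  have key : ∀ x, ‖u x * h x‖ₑ ≤ ENNReal.ofReal (δ * R) * ‖h x‖ₑ +
      ENNReal.ofReal (δ * C / M) * ENNReal.ofReal (Φ (|u x| / δ)) := by
    intro x
    have hC0 : 0 ≤ C := (abs_nonneg _).trans (hC x)
    rw [← ofReal_norm, ← ofReal_norm, ← ENNReal.ofReal_mul (by positivity),
      ← ENNReal.ofReal_mul (by positivity), ← ENNReal.ofReal_add (by positivity)
      (mul_nonneg (by positivity) (hnn x))]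
    apply ENNReal.ofReal_le_ofReal
    rw [norm_mul, Real.norm_eq_abs, Real.norm_eq_abs]
    have h1 := hRM (|u x| / δ) (by positivity)
    have h2 : |u x| ≤ δ * (R + Φ (|u x| / δ) / M) := by
      rw [div_le_iff₀ hδ] at h1; linarith
    calc |u x| * |h x| ≤ δ * (R + Φ (|u x| / δ) / M) * |h x| := by gcongr
      _ = δ * R * |h x| + δ * (Φ (|u x| / δ) / M) * |h x| := by ring
      _ ≤ δ * R * |h x| + δ * (Φ (|u x| / δ) / M) * C := by
        have := hnn x
        gcongr; exact hC x
      _ = _ := by ring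
  calc ∫⁻ x, ‖u x * h x‖ₑ ∂ν ≤ ∫⁻ x, (ENNReal.ofReal (δ * R) * ‖h x‖ₑ +
      ENNReal.ofReal (δ * C / M) * ENNReal.ofReal (Φ (|u x| / δ))) ∂ν := lintegral_mono key
    _ = ENNReal.ofReal (δ * R) * ∫⁻ x, ‖h x‖ₑ ∂ν +
      ENNReal.ofReal (δ * C / M) * ∫⁻ x, ENNReal.ofReal (Φ (|u x| / δ)) ∂ν := by
        rw [lintegral_add_left (by fun_prop), lintegral_const_mul _ (by fun_prop),
          lintegral_const_mul _ (hΦ.meas hu hδ).ennreal_ofReal]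
    _ ≤ _ := by
      gcongr
      calc _ ≤ ENNReal.ofReal (δ * C / M) * 1 := by gcongr
        _ = _ := mul_one _

lemma young_integrable {Φ : ℝ → ℝ} (hΦ : IsYoung Φ) {X : Type*} [MeasurableSpace X]
    {ν : Measure X} [IsFiniteMeasure ν]
    {u : X → ℝ} {δ : ℝ} (hδ : 0 < δ) (hu : Measurable u)
    (hi : ∫⁻ x, ENNReal.ofReal (Φ (|u x| / δ)) ∂ν ≤ 1) : Integrable u ν := by
  obtain ⟨R, hR, hRM⟩ := superlin hΦ one_pos
  have := lint_bound hΦ (h := fun _ => 1) hδ hu measurable_const hi (C := 1) (by simp)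
    one_pos hR hRM
  refine ⟨hu.aestronglyMeasurable, ?_⟩
  simp only [mul_one, enorm_one, lintegral_const, one_mul] at this
  refine lt_of_le_of_lt this ?_
  exact ENNReal.add_lt_top.2 ⟨ENNReal.mul_lt_top ENNReal.ofReal_lt_top (measure_lt_top _ _),
    ENNReal.ofReal_lt_top⟩

lemma small_pairing {Φ : ℝ → ℝ} (hΦ : IsYoung Φ) {X : Type*} [MeasurableSpace X]
    {ν : Measure X} {u h : ℕ → X → ℝ} {δ : ℝ} (hδ : 0 < δ) (hu : ∀ k, Measurable (u k))
    (hh : ∀ k, Measurable (h k))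
    (hi : ∀ k, ∫⁻ x, ENNReal.ofReal (Φ (|u k x| / δ)) ∂ν ≤ 1) {C : ℝ}
    (hC : ∀ k x, |h k x| ≤ C)
    (h0 : Tendsto (fun k => ∫⁻ x, ‖h k x‖ₑ ∂ν) atTop (𝓝 0)) :
    Tendsto (fun k => ∫⁻ x, ‖u k x * h k x‖ₑ ∂ν) atTop (𝓝 0) := by
  rw [ENNReal.tendsto_nhds_zero]
  intro η hη
  obtain ⟨e, he0, heη⟩ : ∃ e : ℝ, 0 < e ∧ ENNReal.ofReal e ≤ η := by
    rcases eq_or_ne η ⊤ with rfl | ht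
    · exact ⟨1, one_pos, le_top⟩
    · exact ⟨η.toReal, ENNReal.toReal_pos hη.ne' ht, ENNReal.ofReal_toReal ht |>.le⟩
  set C' := max C 1
  have hC' : ∀ k x, |h k x| ≤ C' := fun k x => (hC k x).trans (le_max_left _ _)
  have hC'0 : 0 < C' := lt_of_lt_of_le one_pos (le_max_right _ _)
  obtain ⟨R, hR, hRM⟩ := superlin hΦ (M := 2 * δ * C' / e) (by positivity)
  have h1 : Tendsto (fun k => ENNReal.ofReal (δ * R) * ∫⁻ x, ‖h k x‖ₑ ∂ν) atTop (𝓝 0) := by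
    have := ENNReal.Tendsto.const_mul (a := ENNReal.ofReal (δ * R)) h0
      (Or.inr ENNReal.ofReal_ne_top)
    simpa using this
  filter_upwards [(ENNReal.tendsto_nhds_zero.1 h1) (ENNReal.ofReal (e / 2)) (by simp [he0])]
    with k hk
  refine (lint_bound hΦ hδ (hu k) (hh k) (hi k) (hC' k) (by positivity) hR hRM).trans ?_
  refine le_trans (add_le_add_left hk _) ?_
  rw [← ENNReal.ofReal_add (by positivity) (by positivity)]
  refine le_trans (ENNReal.ofReal_le_ofReal ?_) heη
  apply le_of_eq
  field_simp
  ring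

lemma zper_bdd {N : ℕ} {g : (Fin N → ℝ) → ℝ} (hg : Continuous g) (hp : ZPeriodic g) :
    ∃ C, ∀ y, |g y| ≤ C := by
  obtain ⟨C, hC⟩ := (isCompact_Icc (a := (0 : Fin N → ℝ)) (b := 1)).exists_bound_of_continuousOn
    hg.continuousOn
  refine ⟨C, fun y => ?_⟩
  have := hp y (fun i => -⌊y i⌋)
  rw [← this]
  apply hC
  constructor
  · intro i; simp [Int.floor_le]
  · intro i; simp; linarith [Int.lt_floor_add_one (y i)]

lemma zper_sub {N : ℕ} {g : (Fin N → ℝ) → ℝ} (hp : ZPeriodic g) (ρ : Fin N → ℝ) :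
    ZPeriodic fun y => g (y - ρ) := by
  intro y k
  have := hp (y - ρ) k
  simp only
  rw [← this]; congr 1; abel

open Pointwise in
lemma fd_aux (N : ℕ) (ρ : Fin N → ℝ) :
    IsAddFundamentalDomain (Submodule.span ℤ (Set.range (Pi.basisFun ℝ (Fin N)))).toAddSubgroup
      (ρ +ᵥ ZSpan.fundamentalDomain (Pi.basisFun ℝ (Fin N))) (volume : Measure (Fin N → ℝ)) :=
  (ZSpan.isAddFundamentalDomain' _ _).vadd_of_comm ρ

lemma zper_span {N : ℕ} {β : Type*} {f : (Fin N → ℝ) → β}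
    (hp : ∀ (y : Fin N → ℝ) (k : Fin N → ℤ), f (y + fun i => (k i : ℝ)) = f y)
    (g : (Submodule.span ℤ (Set.range (Pi.basisFun ℝ (Fin N)))).toAddSubgroup) (x : Fin N → ℝ) :
    f (g +ᵥ x) = f x := by
  obtain ⟨g, hg⟩ := g
  rw [Submodule.mem_toAddSubgroup, Module.Basis.mem_span_iff_repr_mem] at hg
  choose k hk using hg
  have : g = fun i => (k i : ℝ) := by
    ext i; have := hk i; simpa using this.symm
  change f (g + x) = f x
  rw [add_comm, this, hp]

lemma ycube_ae (N : ℕ) :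
    (volume : Measure (Fin N → ℝ)).restrict (Ycube N) = (volume : Measure (Fin N → ℝ)).restrict
      (ZSpan.fundamentalDomain (Pi.basisFun ℝ (Fin N))) := by
  apply Measure.restrict_congr_set
  rw [ZSpan.fundamentalDomain_pi_basisFun]
  exact (Measure.univ_pi_Ico_ae_eq_Icc (μ := fun _ : Fin N => (volume : Measure ℝ))
    (f := 0) (g := 1)).symm

open Pointwise in
lemma zper_integral {N : ℕ} {f : (Fin N → ℝ) → ℝ} (hp : ZPeriodic f) (ρ : Fin N → ℝ) :
    ∫ y in Ycube N, f (y + ρ) = ∫ y in Ycube N, f y := by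
  have : Countable (Submodule.span ℤ (Set.range (Pi.basisFun ℝ (Fin N)))).toAddSubgroup :=
    inferInstanceAs (Countable (Submodule.span ℤ (Set.range (Pi.basisFun ℝ (Fin N)))))
  rw [ycube_ae, (ZSpan.isAddFundamentalDomain' (Pi.basisFun ℝ (Fin N)) volume).setIntegral_eq
    (fd_aux N ρ) (zper_span hp)]
  have := (measurePreserving_add_left (volume : Measure (Fin N → ℝ)) ρ).setIntegral_image_emb
    (measurableEmbedding_addLeft ρ) f (ZSpan.fundamentalDomain (Pi.basisFun ℝ (Fin N)))
  simp only [add_comm _ ρ]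
  exact this.symm

open Pointwise in
lemma zper_lintegral {N : ℕ} {f : (Fin N → ℝ) → ℝ≥0∞}
    (hp : ∀ (y : Fin N → ℝ) (k : Fin N → ℤ), f (y + fun i => (k i : ℝ)) = f y)
    (ρ : Fin N → ℝ) :
    ∫⁻ y in Ycube N, f (y + ρ) = ∫⁻ y in Ycube N, f y := by
  have : Countable (Submodule.span ℤ (Set.range (Pi.basisFun ℝ (Fin N)))).toAddSubgroup :=
    inferInstanceAs (Countable (Submodule.span ℤ (Set.range (Pi.basisFun ℝ (Fin N)))))
  rw [ycube_ae, (ZSpan.isAddFundamentalDomain' (Pi.basisFun ℝ (Fin N)) volume).setLIntegral_eq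
    (fd_aux N ρ) _ (zper_span hp)]
  have := (measurePreserving_add_left (volume : Measure (Fin N → ℝ)) ρ).setLIntegral_comp_emb
    (measurableEmbedding_addLeft ρ) f (ZSpan.fundamentalDomain (Pi.basisFun ℝ (Fin N)))
  simp only [add_comm _ ρ]
  rw [this]; rfl

lemma transl_L1 {N : ℕ} {f : (Fin N → ℝ) → ℝ} (hf : Integrable f) (hfm : Measurable f) :
    Tendsto (fun h : Fin N → ℝ => ∫⁻ x, ‖f (x + h) - f x‖ₑ) (𝓝 0) (𝓝 0) := by
  rw [ENNReal.tendsto_nhds_zero]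
  intro η hη
  have hη3 : η / 3 ≠ 0 := by simp [hη.ne']
  obtain ⟨c, hcs, hcl, hcc, hci⟩ := hf.exists_hasCompactSupport_lintegral_sub_le hη3
  have hc0 : Tendsto (fun h : Fin N → ℝ => ∫⁻ x, ‖c (x + h) - c x‖ₑ) (𝓝 0) (𝓝 0) := by
    obtain ⟨B, hB⟩ := hcs.isCompact.isBounded.subset_closedBall 0
    obtain ⟨C, hC⟩ := hcs.exists_bound_of_continuous hcc
    have : Tendsto (fun h : Fin N → ℝ => ∫⁻ x, ‖c (x + h) - c x‖ₑ) (𝓝 0)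
        (𝓝 (∫⁻ x : Fin N → ℝ, 0)) := by
      refine tendsto_lintegral_filter_of_dominated_convergence
        ((Metric.closedBall (0 : Fin N → ℝ) (B + 1)).indicator
          fun _ => ENNReal.ofReal (2 * C)) ?_ ?_ ?_ ?_
      · filter_upwards with h
        have := hcc.measurable
        fun_prop
      · filter_upwards [Metric.ball_mem_nhds (0 : Fin N → ℝ) one_pos] with h hh
        filter_upwards with x
        by_cases hx : x ∈ Metric.closedBall (0 : Fin N → ℝ) (B + 1)
        · rw [Set.indicator_of_mem hx, ← ofReal_norm]
          apply ENNReal.ofReal_le_ofReal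
          refine (norm_sub_le _ _).trans ?_
          linarith [hC x, hC (x + h)]
        · have h1 : c x = 0 := by
            apply image_eq_zero_of_notMem_tsupport
            intro h2
            have := hB h2
            simp at this hx
            linarith
          have h3 : c (x + h) = 0 := by
            apply image_eq_zero_of_notMem_tsupport
            intro h2
            have := hB h2
            simp at this hx hh
            have h4 : ‖x‖ ≤ ‖x + h‖ + ‖h‖ := by
              have := norm_sub_le (x + h) h
              simpa using this
            linarith
          simp [h1, h3]
      · rw [lintegral_indicator Metric.isClosed_closedBall.measurableSet, lintegral_const]
        apply ENNReal.mul_ne_top ENNReal.ofReal_ne_top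
        rw [Measure.restrict_apply_univ]
        exact measure_closedBall_lt_top.ne
      · filter_upwards with x
        have : Continuous fun h => ‖c (x + h) - c x‖ₑ := by fun_prop
        have := this.tendsto 0
        simpa using this
    simpa using this
  filter_upwards [(ENNReal.tendsto_nhds_zero.1 hc0) (η / 3) (pos_iff_ne_zero.2 hη3)] with h hh
  have hcm := hcc.measurable
  calc ∫⁻ x, ‖f (x + h) - f x‖ₑ ≤ ∫⁻ x, (‖f (x + h) - c (x + h)‖ₑ + ‖c (x + h) - c x‖ₑ
        + ‖f x - c x‖ₑ) := by
        apply lintegral_mono; intro x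
        have : f (x + h) - f x = (f (x + h) - c (x + h)) + (c (x + h) - c x) - (f x - c x) := by
          ring
        simp only
        rw [this]
        exact (enorm_sub_le).trans (add_le_add_left (enorm_add_le _ _) _)
    _ = (∫⁻ x, ‖f (x + h) - c (x + h)‖ₑ) + (∫⁻ x, ‖c (x + h) - c x‖ₑ)
        + ∫⁻ x, ‖f x - c x‖ₑ := by
        rw [lintegral_add_left (by fun_prop), lintegral_add_left (by fun_prop)]
    _ ≤ η / 3 + η / 3 + η / 3 := by
        rw [lintegral_add_right_eq_self (fun x => ‖f x - c x‖ₑ) h]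
        gcongr
    _ = η := ENNReal.add_thirds η

lemma strong_cont {N : ℕ} {Ω : Type*} [MeasurableSpace Ω] (μ : Measure Ω)
    [IsProbabilityMeasure μ] (T : (Fin N → ℝ) → Ω → Ω) (hT : IsDynSys μ T)
    {ψ : Ω → ℝ} (hψ : Measurable ψ) {C : ℝ} (hC : ∀ ω, |ψ ω| ≤ C) :
    Tendsto (fun h : Fin N → ℝ => ∫⁻ ω, ‖ψ (T h ω) - ψ ω‖ₑ ∂μ) (𝓝 0) (𝓝 0) := by
  obtain ⟨-, hadd, hmp, hjm⟩ := hT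
  set K := Metric.closedBall (0 : Fin N → ℝ) 1
  set K2 := Metric.closedBall (0 : Fin N → ℝ) 2
  have hK : MeasurableSet K := Metric.isClosed_closedBall.measurableSet
  have hK2 : MeasurableSet K2 := Metric.isClosed_closedBall.measurableSet
  have hKf : volume K < ⊤ := measure_closedBall_lt_top
  have hF : Measurable fun p : (Fin N → ℝ) × Ω => ψ (T p.1 p.2) := hψ.comp hjm
  have hbd : ∀ a b : Ω, ‖ψ a - ψ b‖ₑ ≤ ENNReal.ofReal (2 * C) := by
    intro a b
    rw [← ofReal_norm]
    apply ENNReal.ofReal_le_ofReal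
    refine (norm_sub_le _ _).trans ?_
    have h1 := hC a
    have h2 := hC b
    rw [Real.norm_eq_abs, Real.norm_eq_abs]
    linarith
  have hm3 : ∀ h : Fin N → ℝ, Measurable fun p : Ω × (Fin N → ℝ) =>
      ‖ψ (T (p.2 + h) p.1) - ψ (T p.2 p.1)‖ₑ := by
    intro h
    have h1 : Measurable fun p : Ω × (Fin N → ℝ) => ψ (T (p.2 + h) p.1) :=
      hF.comp (((measurable_snd).add_const h).prodMk measurable_fst)
    have h2 : Measurable fun p : Ω × (Fin N → ℝ) => ψ (T p.2 p.1) :=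
      hF.comp ((measurable_snd).prodMk measurable_fst)
    exact (h1.sub h2).enorm
  have hlim : Tendsto (fun h : Fin N → ℝ =>
      ∫⁻ ω, (∫⁻ x in K, ‖ψ (T (x + h) ω) - ψ (T x ω)‖ₑ) ∂μ) (𝓝 0) (𝓝 (∫⁻ ω : Ω, 0 ∂μ)) := by
    refine tendsto_lintegral_filter_of_dominated_convergence
      (fun _ => ENNReal.ofReal (2 * C) * volume K) ?_ ?_ ?_ ?_
    · filter_upwards with h
      exact (hm3 h).lintegral_prod_right'
    · filter_upwards with h
      filter_upwards with ω
      calc _ ≤ ∫⁻ x in K, ENNReal.ofReal (2 * C) := lintegral_mono fun x => hbd _ _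
        _ = _ := by simp
    · simp only [lintegral_const, measure_univ, mul_one]
      exact ENNReal.mul_ne_top ENNReal.ofReal_ne_top hKf.ne
    · filter_upwards with ω
      have hfm : Measurable fun x => ψ (T x ω) := hF.comp (measurable_id.prodMk measurable_const)
      have hfm2 : Measurable (K2.indicator fun x => ψ (T x ω)) := hfm.indicator hK2
      have hi : Integrable (K2.indicator fun x => ψ (T x ω)) := by
        rw [integrable_indicator_iff hK2]
        refine Measure.integrableOn_of_bounded (M := C) measure_closedBall_lt_top.ne
          hfm.aestronglyMeasurable ?_
        filter_upwards with x using hC _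
      have := transl_L1 hi hfm2
      refine tendsto_of_tendsto_of_tendsto_of_le_of_le' tendsto_const_nhds this
        (Eventually.of_forall fun _ => zero_le) ?_
      filter_upwards [Metric.ball_mem_nhds (0 : Fin N → ℝ) one_pos] with h hh
      refine le_trans (le_of_eq ?_) (setLIntegral_le_lintegral K _)
      refine setLIntegral_congr_fun hK fun x hx => ?_
      simp only [K, Metric.mem_closedBall, Metric.mem_ball, dist_zero_right] at hx hh
      have h1 : x ∈ K2 := by simp [K2]; linarith
      have h2 : x + h ∈ K2 := by
        simp only [K2, Metric.mem_closedBall, dist_zero_right]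
        linarith [norm_add_le x h]
      simp only [Set.indicator_of_mem h1, Set.indicator_of_mem h2]
  have heq : ∀ h : Fin N → ℝ, ∫⁻ ω, (∫⁻ x in K, ‖ψ (T (x + h) ω) - ψ (T x ω)‖ₑ) ∂μ =
      (∫⁻ ω, ‖ψ (T h ω) - ψ ω‖ₑ ∂μ) * volume K := by
    intro h
    rw [lintegral_lintegral_swap (hm3 h).aemeasurable]
    rw [← setLIntegral_const]
    refine setLIntegral_congr_fun hK fun x _ => ?_
    have hm : Measurable fun ω => ‖ψ (T h ω) - ψ ω‖ₑ :=
      ((hψ.comp (hmp h).measurable).sub hψ).enorm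
    rw [← (hmp x).lintegral_comp hm]
    apply lintegral_congr; intro ω
    rw [add_comm x h, hadd]; rfl
  simp only [heq, lintegral_zero] at hlim
  have hK0 : volume K ≠ 0 := (Metric.measure_closedBall_pos volume _ one_pos).ne'
  have := ENNReal.Tendsto.mul_const (b := (volume K)⁻¹) hlim (Or.inr (ENNReal.inv_ne_top.2 hK0))
  simpa only [mul_assoc, ENNReal.mul_inv_cancel hK0 hKf.ne, mul_one, zero_mul] using this

lemma jensen_set {E : Type*} [MeasurableSpace E] {ν : Measure E} {Φ : ℝ → ℝ} (hΦ : IsYoung Φ)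
    {B : Set E} (h0 : ν B ≠ 0)
    (hB : ν B ≠ ⊤) {f : E → ℝ} (hfm : Measurable f) {δ : ℝ} (hδ : 0 < δ) :
    ENNReal.ofReal (Φ (|∫ ρ in B, f ρ ∂ν| / (δ * (ν B).toReal))) ≤
      (ν B)⁻¹ * ∫⁻ ρ in B, ENNReal.ofReal (Φ (|f ρ| / δ)) ∂ν := by
  have hb : 0 < (ν B).toReal := ENNReal.toReal_pos h0 hB
  have hnn : ∀ x, 0 ≤ Φ (|f x| / δ) := fun x => hΦ.2.2.2.2.1 _ (by positivity)
  by_cases hf : IntegrableOn f B ν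
  swap
  · rw [integral_undef hf]
    simp [hΦ.2.2.1]
  by_cases htop : ∫⁻ ρ in B, ENNReal.ofReal (Φ (|f ρ| / δ)) ∂ν = ⊤
  · rw [htop, ENNReal.mul_top (ENNReal.inv_ne_zero.2 hB)]
    exact le_top
  have hm := hΦ.meas hfm hδ
  have hgi : IntegrableOn (fun ρ => Φ (|f ρ| / δ)) B ν := by
    refine ⟨hm.aestronglyMeasurable, ?_⟩
    rw [hasFiniteIntegral_iff_ofReal (Eventually.of_forall hnn)]
    exact lt_top_iff_ne_top.2 htop
  have hj := hΦ.2.1.map_set_average_le (f := fun ρ => |f ρ| / δ) hΦ.1 isClosed_Ici h0 hB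
    (Eventually.of_forall fun x => by simp only [Set.mem_Ici]; positivity)
    (hf.abs.div_const δ) hgi
  have h1 : |∫ ρ in B, f ρ ∂ν| / (δ * (ν B).toReal) ≤ ⨍ ρ in B, |f ρ| / δ ∂ν := by
    rw [setAverage_eq, integral_div, smul_eq_mul, measureReal_def]
    have : |∫ ρ in B, f ρ ∂ν| ≤ ∫ ρ in B, |f ρ| ∂ν := abs_integral_le_integral_abs
    calc _ ≤ (∫ ρ in B, |f ρ| ∂ν) / (δ * (ν B).toReal) := by gcongr
      _ = _ := by field_simp
  have h2 := (hΦ.mono (by positivity) h1).trans hj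
  refine (ENNReal.ofReal_le_ofReal h2).trans (le_of_eq ?_)
  rw [setAverage_eq, smul_eq_mul, ENNReal.ofReal_mul (by positivity), measureReal_def,
    ENNReal.ofReal_inv_of_pos hb, ENNReal.ofReal_toReal hB,
    ofReal_integral_eq_lintegral_ofReal hgi (Eventually.of_forall hnn)]

section setup
variable {N : ℕ} {Ω : Type*} [MeasurableSpace Ω]

lemma nu_eq (μ : Measure Ω) [SFinite μ] (Q : Set (Fin N → ℝ)) :
    ((volume : Measure (Fin N → ℝ)).restrict Q).prod μ =
      ((volume : Measure (Fin N → ℝ)).prod μ).restrict (Q ×ˢ Set.univ) := by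
  rw [← Measure.prod_restrict, Measure.restrict_univ]

lemma shift_mp (μ : Measure Ω) [SFinite μ] (a : Fin N → ℝ) :
    MeasurePreserving (fun p : (Fin N → ℝ) × Ω => (p.1 + a, p.2))
      ((volume : Measure (Fin N → ℝ)).prod μ) ((volume : Measure (Fin N → ℝ)).prod μ) :=
  (measurePreserving_add_right volume a).prod (MeasurePreserving.id μ)

lemma shift_me (a : Fin N → ℝ) :
    MeasurableEmbedding (fun p : (Fin N → ℝ) × Ω => (p.1 + a, p.2)) :=
  ((MeasurableEquiv.addRight a).prodCongr (MeasurableEquiv.refl Ω)).measurableEmbedding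

lemma shift_le (μ : Measure Ω) [SFinite μ] {Q : Set (Fin N → ℝ)} (hQ : MeasurableSet Q)
    {F : (Fin N → ℝ) × Ω → ℝ≥0∞}
    (h0 : ∀ x ∉ Q, ∀ ω, F (x, ω) = 0) (a : Fin N → ℝ) :
    ∫⁻ p, F (p.1 + a, p.2) ∂(volume.restrict Q).prod μ ≤ ∫⁻ p, F p ∂(volume.restrict Q).prod μ := by
  rw [nu_eq]
  calc _ ≤ ∫⁻ p, F (p.1 + a, p.2) ∂(volume : Measure (Fin N → ℝ)).prod μ :=
        setLIntegral_le_lintegral _ _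
    _ = ∫⁻ p, F p ∂(volume : Measure (Fin N → ℝ)).prod μ :=
        (shift_mp μ a).lintegral_comp_emb (shift_me a) F
    _ = _ := by
        rw [← lintegral_indicator (hQ.prod MeasurableSet.univ)]
        apply lintegral_congr; rintro ⟨x, ω⟩
        by_cases hx : x ∈ Q
        · rw [Set.indicator_of_mem (by simp [hx])]
        · rw [Set.indicator_of_notMem (by simp [hx]), h0 x hx]

lemma ball_open (r : ℝ) : IsOpen {ρ : Fin N → ℝ | enorm2 ρ < r} := by
  apply isOpen_lt _ continuous_const
  unfold enorm2
  fun_prop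

lemma ball_top (r : ℝ) : volume {ρ : Fin N → ℝ | enorm2 ρ < r} ≠ ⊤ := by
  have : {ρ : Fin N → ℝ | enorm2 ρ < r} ⊆ Metric.closedBall 0 (max r 0) := by
    intro ρ hρ
    simp only [Set.mem_ofPred_eq, enorm2] at hρ
    rw [Metric.mem_closedBall, dist_zero_right, pi_norm_le_iff_of_nonneg (le_max_right _ _)]
    intro i
    refine le_trans ?_ (hρ.le.trans (le_max_left _ _))
    rw [Real.norm_eq_abs]
    apply Real.abs_le_sqrt
    exact Finset.single_le_sum (f := fun i => ρ i ^ 2) (fun i _ => sq_nonneg _) (Finset.mem_univ i)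
  exact ((measure_mono this).trans_lt measure_closedBall_lt_top).ne

lemma ball_pos {r : ℝ} (hr : 0 < r) : volume {ρ : Fin N → ℝ | enorm2 ρ < r} ≠ 0 :=
  ((ball_open r).measure_pos volume ⟨0, by simp [enorm2, hr]⟩).ne'

lemma meas_shift {u : (Fin N → ℝ) → Ω → ℝ}
    (hu : Measurable fun p : (Fin N → ℝ) × Ω => u p.1 p.2) (s : ℝ) :
    Measurable fun q : ((Fin N → ℝ) × Ω) × (Fin N → ℝ) => u (q.1.1 + s • q.2) q.1.2 :=
  hu.comp (f := fun q : ((Fin N → ℝ) × Ω) × (Fin N → ℝ) => (q.1.1 + s • q.2, q.1.2)) (by fun_prop)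

lemma lux_avg (μ : Measure Ω) [SFinite μ] {Q : Set (Fin N → ℝ)} (hQ : MeasurableSet Q)
    {Φ : ℝ → ℝ} (hΦ : IsYoung Φ) {u : (Fin N → ℝ) → Ω → ℝ}
    (hu : Measurable fun p : (Fin N → ℝ) × Ω => u p.1 p.2)
    (h0 : ∀ x ∉ Q, ∀ ω, u x ω = 0) {δ : ℝ} (hδ : 0 < δ)
    (hi : ∫⁻ p, ENNReal.ofReal (Φ (|u p.1 p.2| / δ)) ∂(volume.restrict Q).prod μ ≤ 1)
    (s : ℝ) {B : Set (Fin N → ℝ)} (hB0 : volume B ≠ 0) (hB : volume B ≠ ⊤) :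
    luxNorm Φ ((volume.restrict Q).prod μ) (fun p => ∫ ρ in B, u (p.1 + s • ρ) p.2) ≤
      ENNReal.ofReal (δ * (volume B).toReal) := by
  apply sInf_le
  refine ⟨_, mul_pos hδ (ENNReal.toReal_pos hB0 hB), rfl, ?_⟩
  have hm := meas_shift hu s
  have hm2 := (hΦ.meas hm hδ).ennreal_ofReal
  calc _ ≤ ∫⁻ p, (volume B)⁻¹ * (∫⁻ ρ in B, ENNReal.ofReal (Φ (|u (p.1 + s • ρ) p.2| / δ)))
        ∂(volume.restrict Q).prod μ := by
        apply lintegral_mono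
        intro p
        exact jensen_set hΦ hB0 hB (hm.comp (measurable_const.prodMk measurable_id)) hδ
    _ = (volume B)⁻¹ * ∫⁻ ρ in B, ∫⁻ p, ENNReal.ofReal (Φ (|u (p.1 + s • ρ) p.2| / δ))
        ∂(volume.restrict Q).prod μ := by
        rw [lintegral_const_mul _ hm2.lintegral_prod_right',
          lintegral_lintegral_swap hm2.aemeasurable]
    _ ≤ (volume B)⁻¹ * ∫⁻ ρ in B, 1 := by
        gcongr with ρ
        refine le_trans (shift_le μ hQ
          (F := fun p => ENNReal.ofReal (Φ (|u p.1 p.2| / δ))) ?_ (s • ρ)) hi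
        intro x hx ω
        simp [h0 x hx, hΦ.2.2.1]
    _ = 1 := by simp [ENNReal.inv_mul_cancel hB0 hB]

lemma iter3 {A B C : Type*} [MeasurableSpace A] [MeasurableSpace B] [MeasurableSpace C]
    {a : Measure A} {b : Measure B} {c : Measure C} [SFinite a] [SFinite b] [SFinite c]
    {K : (A × B) × C → ℝ} (hK : Integrable K ((a.prod b).prod c)) :
    ∫ x, ∫ y, ∫ z, K ((x, y), z) ∂c ∂b ∂a = ∫ q, K q ∂(a.prod b).prod c := by
  rw [integral_prod _ hK, integral_prod _ hK.integral_prod_left]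

lemma limit_swap (μ : Measure Ω) [IsProbabilityMeasure μ] {Q : Set (Fin N → ℝ)}
    [IsFiniteMeasure ((volume : Measure (Fin N → ℝ)).restrict Q)]
    {u₀ : (Fin N → ℝ) → Ω → (Fin N → ℝ) → ℝ}
    (hu₀meas : Measurable fun p : ((Fin N → ℝ) × Ω) × (Fin N → ℝ) => u₀ p.1.1 p.1.2 p.2)
    (hu₀per : ∀ x ω, ZPeriodic (u₀ x ω))
    (hi : Integrable (fun p : ((Fin N → ℝ) × Ω) × (Fin N → ℝ) => u₀ p.1.1 p.1.2 p.2)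
      (((volume.restrict Q).prod μ).prod (volume.restrict (Ycube N))))
    {B : Set (Fin N → ℝ)} (hB : volume B ≠ ⊤)
    {φ g : (Fin N → ℝ) → ℝ} {ψ : Ω → ℝ} (hφ : Continuous φ) (hψ : Measurable ψ)
    (hg : Continuous g) (hgp : ZPeriodic g) {Cφ Cψ Cg : ℝ} (hCφ : ∀ x, |φ x| ≤ Cφ)
    (hCψ : ∀ x, |ψ x| ≤ Cψ) (hCg : ∀ x, |g x| ≤ Cg) :
    ∫ x in Q, (∫ ω, (∫ y in Ycube N, (∫ ρ in B, u₀ x ω (y + ρ)) * φ x * ψ ω * g y) ∂μ) =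
    ∫ ρ in B, ∫ x in Q, (∫ ω, (∫ y in Ycube N, u₀ x ω y * φ x * ψ ω * g (y - ρ)) ∂μ) := by
  set κ := ((volume : Measure (Fin N → ℝ)).restrict Q).prod μ
  have hBf : IsFiniteMeasure ((volume : Measure (Fin N → ℝ)).restrict B) :=
    ⟨by simpa using lt_top_iff_ne_top.2 hB⟩
  have hYf : IsFiniteMeasure ((volume : Measure (Fin N → ℝ)).restrict (Ycube N)) := ⟨by
    simpa [Ycube] using (isCompact_Icc (a := (0 : Fin N → ℝ)) (b := 1)).measure_lt_top⟩
  set F : (((Fin N → ℝ) × Ω) × (Fin N → ℝ)) × (Fin N → ℝ) → ℝ := fun q =>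
    u₀ q.1.1.1 q.1.1.2 (q.1.2 + q.2) * φ q.1.1.1 * ψ q.1.1.2 * g q.1.2 with hF
  have hum : Measurable fun q : (((Fin N → ℝ) × Ω) × (Fin N → ℝ)) × (Fin N → ℝ) =>
      u₀ q.1.1.1 q.1.1.2 (q.1.2 + q.2) :=
    hu₀meas.comp (f := fun q : (((Fin N → ℝ) × Ω) × (Fin N → ℝ)) × (Fin N → ℝ) =>
      (q.1.1, q.1.2 + q.2)) (by fun_prop)
  have hφm := hφ.measurable
  have hgm := hg.measurable
  have hui : Integrable (fun q : (((Fin N → ℝ) × Ω) × (Fin N → ℝ)) × (Fin N → ℝ) =>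
      u₀ q.1.1.1 q.1.1.2 (q.1.2 + q.2)) ((κ.prod (volume.restrict (Ycube N))).prod (volume.restrict B)) := by
    refine ⟨hum.aestronglyMeasurable, ?_⟩
    unfold HasFiniteIntegral
    rw [lintegral_prod_symm' _ hum.enorm]
    have : ∀ ρ : Fin N → ℝ, ∫⁻ x : ((Fin N → ℝ) × Ω) × (Fin N → ℝ),
        ‖u₀ x.1.1 x.1.2 (x.2 + ρ)‖ₑ ∂κ.prod (volume.restrict (Ycube N)) =
        ∫⁻ x : ((Fin N → ℝ) × Ω) × (Fin N → ℝ), ‖u₀ x.1.1 x.1.2 x.2‖ₑ ∂κ.prod (volume.restrict (Ycube N)) := by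
      intro ρ
      have hm1 : Measurable fun x : ((Fin N → ℝ) × Ω) × (Fin N → ℝ) =>
          ‖u₀ x.1.1 x.1.2 (x.2 + ρ)‖ₑ := (hum.comp (f := fun x => (x, ρ)) (by fun_prop)).enorm
      rw [lintegral_prod _ hm1.aemeasurable, lintegral_prod _ hu₀meas.enorm.aemeasurable]
      apply lintegral_congr; intro p
      exact zper_lintegral (f := fun y => ‖u₀ p.1 p.2 y‖ₑ)
        (fun y k => by rw [hu₀per p.1 p.2 y k]) ρ
    simp only [this, lintegral_const]
    exact ENNReal.mul_lt_top hi.2 (measure_lt_top _ _)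
  have hFi : Integrable F ((κ.prod (volume.restrict (Ycube N))).prod (volume.restrict B)) := by
    have h1 := hui.mul_bdd (c := Cφ * Cψ * Cg) (g := fun q => φ q.1.1.1 * ψ q.1.1.2 * g q.1.2)
      (by
        apply Measurable.aestronglyMeasurable
        fun_prop) (by
        filter_upwards with q
        rw [norm_mul, norm_mul]
        have a1 := hCφ q.1.1.1
        have a2 := hCψ q.1.1.2
        have a3 := hCg q.1.2
        have b1 := (abs_nonneg _).trans a1
        have b2 := (abs_nonneg _).trans a2
        simp only [Real.norm_eq_abs]
        gcongr)
    refine h1.congr (Eventually.of_forall fun q => ?_)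
    simp only [hF]; ring
  have hL : ∀ ρ : Fin N → ℝ,
      ∫ x in Q, (∫ ω, (∫ y in Ycube N, u₀ x ω y * φ x * ψ ω * g (y - ρ)) ∂μ) =
      ∫ x in Q, (∫ ω, (∫ y in Ycube N, F (((x, ω), y), ρ)) ∂μ) := by
    intro ρ
    congr 1; ext x; congr 1; ext ω
    rw [← zper_integral (f := fun y => u₀ x ω y * φ x * ψ ω * g (y - ρ)) ?_ ρ]
    · simp [hF]
    · intro y k
      simp only
      have := zper_sub hgp ρ y k
      simp only at this
      rw [hu₀per x ω y k, this]
  have hR : ∀ x ω y, (∫ ρ in B, u₀ x ω (y + ρ)) * φ x * ψ ω * g y =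
      ∫ ρ in B, F (((x, ω), y), ρ) := by
    intro x ω y
    simp only [hF, integral_mul_const]
  simp only [hL, hR]
  rw [iter3 (K := fun q => ∫ ρ in B, F (q, ρ)) hFi.integral_prod_left,
    integral_integral_swap (f := fun q ρ => F (q, ρ)) hFi]
  apply integral_congr_ae
  filter_upwards [hFi.prod_left_ae] with ρ hρ
  rw [iter3 (K := fun q => F (q, ρ)) hρ]



lemma pt_conv (μ : Measure Ω) [IsProbabilityMeasure μ] {Φ : ℝ → ℝ} (hΦ : IsYoung Φ)
    (T : (Fin N → ℝ) → Ω → Ω) (hT : IsDynSys μ T)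
    (Q : Set (Fin N → ℝ)) (hQ : MeasurableSet Q) (hQf : volume Q ≠ ⊤)
    (ε : ℕ → ℝ) (hε : ∀ k, ε k ∈ Set.Ioc (0 : ℝ) 1) (hε0 : Tendsto ε atTop (nhds 0))
    (u : ℕ → (Fin N → ℝ) → Ω → ℝ)
    (humeas : ∀ k, Measurable fun p : (Fin N → ℝ) × Ω => u k p.1 p.2)
    (huzero : ∀ k, ∀ x ∉ Q, ∀ ω, u k x ω = 0) {δ : ℝ} (hδ : 0 < δ)
    (hi : ∀ k, ∫⁻ p, ENNReal.ofReal (Φ (|u k p.1 p.2| / δ)) ∂(volume.restrict Q).prod μ ≤ 1)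
    (hui : ∀ k, Integrable (fun p : (Fin N → ℝ) × Ω => u k p.1 p.2) ((volume.restrict Q).prod μ))
    (u₀ : (Fin N → ℝ) → Ω → (Fin N → ℝ) → ℝ)
    (hconv : WeakStoch2Scale μ T Q ε u u₀)
    {φ g : (Fin N → ℝ) → ℝ} {ψ : Ω → ℝ} (hφ : ContDiff ℝ (⊤ : ℕ∞) φ)
    (hφc : HasCompactSupport φ) (hφQ : tsupport φ ⊆ Q) (hψ : Measurable ψ)
    (hg : Continuous g) (hgp : ZPeriodic g) {Cφ Cψ Cg : ℝ} (hCφ : ∀ x, |φ x| ≤ Cφ)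
    (hCψ : ∀ x, |ψ x| ≤ Cψ) (hCg : ∀ x, |g x| ≤ Cg) (ρ : Fin N → ℝ) :
    Tendsto (fun k => ∫ p : (Fin N → ℝ) × Ω, u k (p.1 + (ε k) ^ 2 • ρ) p.2 * φ p.1 *
        ψ (T ((ε k)⁻¹ • p.1) p.2) * g (((ε k) ^ 2)⁻¹ • p.1) ∂(volume.restrict Q).prod μ) atTop
      (𝓝 (∫ x in Q, (∫ ω, (∫ y in Ycube N, u₀ x ω y * φ x * ψ ω * g (y - ρ)) ∂μ))) := by
  have hT' := hT
  obtain ⟨-, hadd, hmp, hjm⟩ := hT'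
  set ν := ((volume : Measure (Fin N → ℝ)).restrict Q).prod μ with hν
  have hφm : Measurable φ := hφ.continuous.measurable
  have hgm := hg.measurable
  have hψT : ∀ (c : ℝ) (a : Fin N → ℝ),
      Measurable fun p : (Fin N → ℝ) × Ω => ψ (T (c • (p.1 - a)) p.2) := fun c a =>
    (hψ.comp hjm).comp (f := fun p : (Fin N → ℝ) × Ω => (c • (p.1 - a), p.2)) (by fun_prop)
  have hψT0 : ∀ (c : ℝ),
      Measurable fun p : (Fin N → ℝ) × Ω => ψ (T (c • p.1) p.2) := fun c => by
    simpa using hψT c 0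
  -- change of variables
  have hI : ∀ k, ∫ p : (Fin N → ℝ) × Ω, u k (p.1 + (ε k) ^ 2 • ρ) p.2 * φ p.1 *
        ψ (T ((ε k)⁻¹ • p.1) p.2) * g (((ε k) ^ 2)⁻¹ • p.1) ∂ν =
      ∫ p : (Fin N → ℝ) × Ω, u k p.1 p.2 * (φ (p.1 - (ε k) ^ 2 • ρ) *
        ψ (T ((ε k)⁻¹ • (p.1 - (ε k) ^ 2 • ρ)) p.2) * g (((ε k) ^ 2)⁻¹ • p.1 - ρ)) ∂ν := by
    intro k
    have hε' : (ε k) ^ 2 ≠ 0 := pow_ne_zero _ (hε k).1.ne'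
    rw [hν, nu_eq]
    rw [setIntegral_eq_integral_of_forall_compl_eq_zero, setIntegral_eq_integral_of_forall_compl_eq_zero]
    · rw [← (shift_mp μ ((ε k) ^ 2 • ρ)).integral_comp (shift_me _) (fun p : (Fin N → ℝ) × Ω =>
        u k p.1 p.2 * (φ (p.1 - (ε k) ^ 2 • ρ) *
        ψ (T ((ε k)⁻¹ • (p.1 - (ε k) ^ 2 • ρ)) p.2) * g (((ε k) ^ 2)⁻¹ • p.1 - ρ)))]
      congr 1; ext p
      simp only [add_sub_cancel_right, smul_add, smul_smul, inv_mul_cancel₀ hε', one_smul]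
      ring
    · rintro ⟨x, ω⟩ hx
      have : x ∉ Q := by simpa using hx
      simp [huzero k x this]
    · rintro ⟨x, ω⟩ hx
      have : x ∉ Q := by simpa using hx
      have : φ x = 0 := image_eq_zero_of_notMem_tsupport fun h => this (hφQ h)
      simp [this]
  -- main term
  have hJ := hconv φ hφ hφc hφQ ψ hψ ⟨Cψ, hCψ⟩ (fun y => g (y - ρ)) (by fun_prop)
    (zper_sub hgp ρ)
  have hb3 : ∀ (a b c : ℝ), |a| ≤ Cφ → |b| ≤ Cψ → |c| ≤ Cg → |a * b * c| ≤ Cφ * Cψ * Cg := by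
    intro a b c h1 h2 h3
    have b1 := (abs_nonneg _).trans h1
    have b2 := (abs_nonneg _).trans h2
    rw [abs_mul, abs_mul]
    gcongr
  have hm2 : ∀ k, Measurable fun p : (Fin N → ℝ) × Ω => φ p.1 *
        ψ (T ((ε k)⁻¹ • p.1) p.2) * g (((ε k) ^ 2)⁻¹ • p.1 - ρ) := fun k =>
    ((hφm.comp measurable_fst).mul (hψT0 _)).mul (by fun_prop)
  have hm1 : ∀ k, Measurable fun p : (Fin N → ℝ) × Ω => φ (p.1 - (ε k) ^ 2 • ρ) *
        ψ (T ((ε k)⁻¹ • (p.1 - (ε k) ^ 2 • ρ)) p.2) * g (((ε k) ^ 2)⁻¹ • p.1 - ρ) := fun k =>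
    Measurable.mul (Measurable.mul (by fun_prop) (hψT _ _)) (by fun_prop)
  have hi2 : ∀ k, Integrable (fun p : (Fin N → ℝ) × Ω => u k p.1 p.2 * (φ p.1 *
        ψ (T ((ε k)⁻¹ • p.1) p.2) * g (((ε k) ^ 2)⁻¹ • p.1 - ρ))) ν := fun k =>
    (hui k).mul_bdd (c := Cφ * Cψ * Cg) (hm2 k).aestronglyMeasurable
      (Eventually.of_forall fun p => hb3 _ _ _ (hCφ _) (hCψ _) (hCg _))
  have hi1 : ∀ k, Integrable (fun p : (Fin N → ℝ) × Ω => u k p.1 p.2 *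
        (φ (p.1 - (ε k) ^ 2 • ρ) *
        ψ (T ((ε k)⁻¹ • (p.1 - (ε k) ^ 2 • ρ)) p.2) * g (((ε k) ^ 2)⁻¹ • p.1 - ρ))) ν := fun k =>
    (hui k).mul_bdd (c := Cφ * Cψ * Cg) (hm1 k).aestronglyMeasurable
      (Eventually.of_forall fun p => hb3 _ _ _ (hCφ _) (hCψ _) (hCg _))
  have hJ' : ∀ k, ∫ x in Q, (∫ ω, u k x ω * φ x * ψ (T ((ε k)⁻¹ • x) ω) *
              g (((ε k) ^ 2)⁻¹ • x - ρ) ∂μ) = ∫ p : (Fin N → ℝ) × Ω, u k p.1 p.2 * (φ p.1 *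
        ψ (T ((ε k)⁻¹ • p.1) p.2) * g (((ε k) ^ 2)⁻¹ • p.1 - ρ)) ∂ν := by
    intro k
    rw [hν, integral_prod _ (hi2 k)]
    simp only [mul_assoc]
  simp only [hJ'] at hJ
  -- error term
  set h : ℕ → (Fin N → ℝ) × Ω → ℝ := fun k p =>
    φ (p.1 - (ε k) ^ 2 • ρ) *
        ψ (T ((ε k)⁻¹ • (p.1 - (ε k) ^ 2 • ρ)) p.2) * g (((ε k) ^ 2)⁻¹ • p.1 - ρ) -
      φ p.1 * ψ (T ((ε k)⁻¹ • p.1) p.2) * g (((ε k) ^ 2)⁻¹ • p.1 - ρ) with hh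
  have hhm : ∀ k, Measurable (h k) := fun k => (hm1 k).sub (hm2 k)
  have hhb : ∀ k p, |h k p| ≤ Cφ * Cψ * Cg + Cφ * Cψ * Cg := fun k p =>
    (abs_sub _ _).trans (add_le_add (hb3 _ _ _ (hCφ _) (hCψ _) (hCg _))
      (hb3 _ _ _ (hCφ _) (hCψ _) (hCg _)))
  have ht1 : Tendsto (fun k => -((ε k) ^ 2 • ρ)) atTop (𝓝 0) := by
    have := ((hε0.pow 2).smul_const ρ).neg
    simpa using this
  have ht2 : Tendsto (fun k => -((ε k) • ρ)) atTop (𝓝 0) := by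
    have := (hε0.smul_const ρ).neg
    simpa using this
  have hz1 := (transl_L1 (hφ.continuous.integrable_of_hasCompactSupport hφc) hφm).comp ht1
  have hz2 := (strong_cont μ T hT hψ hCψ).comp ht2
  have hptw : ∀ k p, ‖h k p‖ₑ ≤ ENNReal.ofReal (Cψ * Cg) * ‖φ (p.1 + -((ε k) ^ 2 • ρ)) - φ p.1‖ₑ +
      ENNReal.ofReal (Cφ * Cg) *
        ‖ψ (T (-((ε k) • ρ)) (T ((ε k)⁻¹ • p.1) p.2)) - ψ (T ((ε k)⁻¹ • p.1) p.2)‖ₑ := by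
    intro k p
    have e1 : T ((ε k)⁻¹ • (p.1 - (ε k) ^ 2 • ρ)) p.2 =
        T (-((ε k) • ρ)) (T ((ε k)⁻¹ • p.1) p.2) := by
      have : (ε k)⁻¹ • (p.1 - (ε k) ^ 2 • ρ) = -((ε k) • ρ) + (ε k)⁻¹ • p.1 := by
        have := (hε k).1.ne'
        rw [smul_sub, smul_smul, pow_two, inv_mul_cancel_left₀ this]
        abel
      rw [this, hadd]; rfl
    have c1 := (abs_nonneg _).trans (hCφ p.1)
    have c2 := (abs_nonneg _).trans (hCψ p.2)
    have c3 := (abs_nonneg _).trans (hCg p.1)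
    simp only [← ofReal_norm]
    rw [← ENNReal.ofReal_mul (by positivity), ← ENNReal.ofReal_mul (by positivity),
      ← ENNReal.ofReal_add (by positivity) (by positivity)]
    apply ENNReal.ofReal_le_ofReal
    simp only [hh, e1, Real.norm_eq_abs, ← sub_eq_add_neg]
    set A := φ (p.1 - (ε k) ^ 2 • ρ)
    set A' := φ p.1
    set D := ψ (T (-((ε k) • ρ)) (T ((ε k)⁻¹ • p.1) p.2)) with hD
    set D' := ψ (T ((ε k)⁻¹ • p.1) p.2)
    set G := g (((ε k) ^ 2)⁻¹ • p.1 - ρ) with hG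
    have hDb : |D| ≤ Cψ := hCψ _
    have hGb : |G| ≤ Cg := hCg _
    have hAb : |A'| ≤ Cφ := hCφ _
    have : A * D * G - A' * D' * G = (D * G) * (A - A') + (A' * G) * (D - D') := by ring
    rw [this]
    refine (abs_add_le _ _).trans ?_
    rw [abs_mul, abs_mul, abs_mul (A' * G), abs_mul A' G]
    gcongr
  have hh0 : Tendsto (fun k => ∫⁻ p, ‖h k p‖ₑ ∂ν) atTop (𝓝 0) := by
    have hlim : Tendsto (fun k => ENNReal.ofReal (Cψ * Cg) *
        (∫⁻ x, ‖φ (x + -((ε k) ^ 2 • ρ)) - φ x‖ₑ) + ENNReal.ofReal (Cφ * Cg) *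
        ((∫⁻ ω, ‖ψ (T (-((ε k) • ρ)) ω) - ψ ω‖ₑ ∂μ) * volume Q)) atTop (𝓝 0) := by
      have a1 := ENNReal.Tendsto.const_mul (a := ENNReal.ofReal (Cψ * Cg)) hz1
        (Or.inr ENNReal.ofReal_ne_top)
      have a2 := ENNReal.Tendsto.const_mul (a := ENNReal.ofReal (Cφ * Cg))
        (ENNReal.Tendsto.mul_const (b := volume Q) hz2 (Or.inr hQf))
        (Or.inr ENNReal.ofReal_ne_top)
      have := a1.add a2
      simpa using this
    refine tendsto_of_tendsto_of_tendsto_of_le_of_le tendsto_const_nhds hlim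
      (fun _ => zero_le) (fun k => ?_)
    have mm1 : Measurable fun p : (Fin N → ℝ) × Ω => ‖φ (p.1 + -((ε k) ^ 2 • ρ)) - φ p.1‖ₑ := by
      fun_prop
    have mo : Measurable fun ω => ‖ψ (T (-((ε k) • ρ)) ω) - ψ ω‖ₑ :=
      ((hψ.comp (hmp _).measurable).sub hψ).enorm
    have mm2 : Measurable fun p : (Fin N → ℝ) × Ω =>
        ‖ψ (T (-((ε k) • ρ)) (T ((ε k)⁻¹ • p.1) p.2)) - ψ (T ((ε k)⁻¹ • p.1) p.2)‖ₑ :=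
      mo.comp (hjm.comp (f := fun p : (Fin N → ℝ) × Ω => ((ε k)⁻¹ • p.1, p.2)) (by fun_prop))
    refine (lintegral_mono (hptw k)).trans ?_
    rw [lintegral_add_left (mm1.const_mul _), lintegral_const_mul _ mm1, lintegral_const_mul _ mm2]
    gcongr
    · rw [hν, lintegral_prod _ mm1.aemeasurable]
      simp only [lintegral_const, measure_univ, mul_one]
      exact setLIntegral_le_lintegral _ _
    · rw [hν, lintegral_prod _ mm2.aemeasurable, ← setLIntegral_const]
      refine lintegral_mono fun x => ?_
      exact ((hmp ((ε k)⁻¹ • x)).lintegral_comp mo).le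
  have hE := small_pairing hΦ hδ humeas hhm hi hhb hh0
  have hE' : Tendsto (fun k => ∫ p, u k p.1 p.2 * h k p ∂ν) atTop (𝓝 0) := by
    rw [tendsto_zero_iff_enorm_tendsto_zero]
    exact tendsto_of_tendsto_of_tendsto_of_le_of_le tendsto_const_nhds hE
      (fun _ => zero_le) (fun k => enorm_integral_le_lintegral_enorm _)
  have hsum := hJ.add hE'
  rw [add_zero] at hsum
  refine hsum.congr fun k => ?_
  rw [hI k]
  symm
  rw [← sub_eq_iff_eq_add', ← integral_sub (hi1 k) (hi2 k)]
  simp only [hh, mul_sub]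

end setup

/-- two-scale convergence of ball averages at scale `ε²`. -/
theorem stmt3 {N : ℕ} (hN : 1 ≤ N) {Ω : Type*} [MeasurableSpace Ω] (μ : Measure Ω)
    [IsProbabilityMeasure μ] (hgen : CountGenModNull μ)
    (Φ : ℝ → ℝ) (hΦ : IsYoung Φ) (hΦ2 : Delta2 Φ) (hΦc2 : Delta2 (conjY Φ))
    (T : (Fin N → ℝ) → Ω → Ω) (hT : IsDynSys μ T)
    (Q : Set (Fin N → ℝ)) (hQo : IsOpen Q) (hQb : Bornology.IsBounded Q)
    (ε : ℕ → ℝ) (hε : ∀ k, ε k ∈ Set.Ioc (0 : ℝ) 1) (hε0 : Tendsto ε atTop (nhds 0))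
    (u : ℕ → (Fin N → ℝ) → Ω → ℝ)
    (humeas : ∀ k, Measurable fun p : (Fin N → ℝ) × Ω => u k p.1 p.2)
    (huzero : ∀ k, ∀ x ∉ Q, ∀ ω, u k x ω = 0)
    (hubd : (⨆ k, luxNorm Φ ((volume.restrict Q).prod μ) fun p => u k p.1 p.2) < ⊤)
    (u₀ : (Fin N → ℝ) → Ω → (Fin N → ℝ) → ℝ)
    (hu₀meas : Measurable fun p : ((Fin N → ℝ) × Ω) × (Fin N → ℝ) => u₀ p.1.1 p.1.2 p.2)
    (hu₀per : ∀ x ω, ZPeriodic (u₀ x ω))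
    (hu₀bd : luxNorm Φ (((volume.restrict Q).prod μ).prod (volume.restrict (Ycube N)))
      (fun p => u₀ p.1.1 p.1.2 p.2) < ⊤)
    (hconv : WeakStoch2Scale μ T Q ε u u₀)
    (r : ℝ) (hr : 0 < r) :
    (⨆ k, luxNorm Φ ((volume.restrict Q).prod μ)
        (fun p => ∫ ρ in {ρ : Fin N → ℝ | enorm2 ρ < r}, u k (p.1 + (ε k) ^ 2 • ρ) p.2)) < ⊤ ∧
      WeakStoch2Scale μ T Q ε
        (fun k x ω => ∫ ρ in {ρ : Fin N → ℝ | enorm2 ρ < r}, u k (x + (ε k) ^ 2 • ρ) ω)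
        (fun x ω y => ∫ ρ in {ρ : Fin N → ℝ | enorm2 ρ < r}, u₀ x ω (y + ρ)) := by
  have hQm := hQo.measurableSet
  have hQf : volume Q < ⊤ := hQb.measure_lt_top
  have hfin : IsFiniteMeasure ((volume : Measure (Fin N → ℝ)).restrict Q) := ⟨by simpa using hQf⟩
  have hYf : IsFiniteMeasure ((volume : Measure (Fin N → ℝ)).restrict (Ycube N)) := ⟨by
    simpa [Ycube] using (isCompact_Icc (a := (0 : Fin N → ℝ)) (b := 1)).measure_lt_top⟩
  obtain ⟨δ, hδ, hi⟩ : ∃ δ : ℝ, 0 < δ ∧ ∀ k, ∫⁻ p, ENNReal.ofReal (Φ (|u k p.1 p.2| / δ))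
      ∂(volume.restrict Q).prod μ ≤ 1 := by
    set S := ⨆ k, luxNorm Φ ((volume.restrict Q).prod μ) fun p => u k p.1 p.2 with hS
    refine ⟨S.toReal + 1, by positivity, fun k => ?_⟩
    apply lux_bound hΦ (u := fun p : (Fin N → ℝ) × Ω => u k p.1 p.2)
    refine lt_of_le_of_lt (le_iSup (fun k => luxNorm Φ ((volume.restrict Q).prod μ)
      fun p => u k p.1 p.2) k) ?_
    rw [← hS, ← ENNReal.ofReal_toReal hubd.ne]
    rw [ENNReal.ofReal_lt_ofReal_iff (by positivity), ENNReal.toReal_ofReal (by positivity)]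
    linarith
  have hB0 := ball_pos (N := N) hr
  have hBt := ball_top (N := N) r
  have hBm := (ball_open (N := N) r).measurableSet
  set B := {ρ : Fin N → ℝ | enorm2 ρ < r}
  have hBf : IsFiniteMeasure ((volume : Measure (Fin N → ℝ)).restrict B) :=
    ⟨by simpa using lt_top_iff_ne_top.2 hBt⟩
  refine ⟨lt_of_le_of_lt (iSup_le fun k => lux_avg μ hQm hΦ (humeas k) (huzero k) hδ (hi k)
    ((ε k) ^ 2) hB0 hBt) ENNReal.ofReal_lt_top, ?_⟩
  have hui : ∀ k, Integrable (fun p : (Fin N → ℝ) × Ω => u k p.1 p.2)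
      ((volume.restrict Q).prod μ) := fun k => young_integrable hΦ hδ (humeas k) (hi k)
  have hu₀i : Integrable (fun p : ((Fin N → ℝ) × Ω) × (Fin N → ℝ) => u₀ p.1.1 p.1.2 p.2)
      (((volume.restrict Q).prod μ).prod (volume.restrict (Ycube N))) := by
    refine young_integrable hΦ (δ := (luxNorm Φ (((volume.restrict Q).prod μ).prod
      (volume.restrict (Ycube N))) (fun p => u₀ p.1.1 p.1.2 p.2)).toReal + 1) (by positivity)
      hu₀meas ?_
    apply lux_bound hΦ (u := fun p : ((Fin N → ℝ) × Ω) × (Fin N → ℝ) => u₀ p.1.1 p.1.2 p.2)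
    conv_lhs => rw [← ENNReal.ofReal_toReal hu₀bd.ne]
    rw [ENNReal.ofReal_lt_ofReal_iff (by positivity)]
    linarith
  -- uniform `L¹` bound
  obtain ⟨D, hD⟩ : ∃ D : ℝ≥0∞, D ≠ ⊤ ∧ ∀ k, ∫⁻ p, ‖u k p.1 p.2‖ₑ ∂(volume.restrict Q).prod μ ≤ D := by
    obtain ⟨R, hR, hRM⟩ := superlin hΦ one_pos
    refine ⟨ENNReal.ofReal (δ * R) * volume Q + ENNReal.ofReal δ, ?_, fun k => ?_⟩
    · exact ENNReal.add_ne_top.2 ⟨ENNReal.mul_ne_top ENNReal.ofReal_ne_top hQf.ne,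
        ENNReal.ofReal_ne_top⟩
    have := lint_bound hΦ (h := fun _ => 1) hδ (humeas k) measurable_const (hi k) (C := 1)
      (by simp) one_pos hR hRM
    have hun : ((volume.restrict Q).prod μ) Set.univ = volume Q := by
      rw [← Set.univ_prod_univ, Measure.prod_prod]; simp
    simpa [hun] using this
  obtain ⟨hDt, hD⟩ := hD
  have hDs : ∀ k (a : Fin N → ℝ), ∫⁻ p, ‖u k (p.1 + a) p.2‖ₑ ∂(volume.restrict Q).prod μ ≤ D :=
    fun k a => (shift_le μ hQm (F := fun p => ‖u k p.1 p.2‖ₑ)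
      (fun x hx ω => by simp [huzero k x hx]) a).trans (hD k)
  intro φ hφ hφc hφQ ψ hψ hψb g hg hgp
  obtain ⟨Cψ, hCψ⟩ := hψb
  obtain ⟨Cφ, hCφ⟩ := hφc.exists_bound_of_continuous hφ.continuous
  obtain ⟨Cg, hCg⟩ := zper_bdd hg hgp
  have hφm : Measurable φ := hφ.continuous.measurable
  have hgm := hg.measurable
  rw [limit_swap μ hu₀meas hu₀per hu₀i hBt hφ.continuous hψ hg hgp hCφ hCψ hCg]
  set ν := ((volume : Measure (Fin N → ℝ)).restrict Q).prod μ with hν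
  set G : ℕ → ((Fin N → ℝ) × Ω) × (Fin N → ℝ) → ℝ := fun k q =>
    u k (q.1.1 + (ε k) ^ 2 • q.2) q.1.2 * φ q.1.1 *
        ψ (T ((ε k)⁻¹ • q.1.1) q.1.2) * g (((ε k) ^ 2)⁻¹ • q.1.1) with hG
  have hGm : ∀ k, Measurable (G k) := fun k => by
    have h1 := meas_shift (humeas k) ((ε k) ^ 2)
    have h2 : Measurable fun q : ((Fin N → ℝ) × Ω) × (Fin N → ℝ) =>
        ψ (T ((ε k)⁻¹ • q.1.1) q.1.2) :=
      (hψ.comp hT.2.2.2).comp (f := fun q : ((Fin N → ℝ) × Ω) × (Fin N → ℝ) =>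
        ((ε k)⁻¹ • q.1.1, q.1.2)) (by fun_prop)
    exact ((h1.mul (by fun_prop)).mul h2).mul (by fun_prop)
  have hGb : ∀ k q, ‖G k q‖ₑ ≤ ENNReal.ofReal (Cφ * Cψ * Cg) *
      ‖u k (q.1.1 + (ε k) ^ 2 • q.2) q.1.2‖ₑ := by
    intro k q
    have c1 := (abs_nonneg _).trans (hCφ q.1.1)
    have c2 := (abs_nonneg _).trans (hCψ q.1.2)
    have c3 := (abs_nonneg _).trans (hCg q.1.1)
    simp only [← ofReal_norm]
    rw [← ENNReal.ofReal_mul (by positivity)]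
    apply ENNReal.ofReal_le_ofReal
    simp only [hG, norm_mul]
    have a1 := hCφ q.1.1
    have a2 := hCψ (T ((ε k)⁻¹ • q.1.1) q.1.2)
    have a3 := hCg (((ε k) ^ 2)⁻¹ • q.1.1)
    rw [← Real.norm_eq_abs] at a2 a3
    calc _ ≤ ‖u k (q.1.1 + (ε k) ^ 2 • q.2) q.1.2‖ * Cφ * Cψ * Cg := by gcongr
      _ = _ := by ring
  have hGs : ∀ k ρ, ∫⁻ p, ‖G k (p, ρ)‖ₑ ∂ν ≤ ENNReal.ofReal (Cφ * Cψ * Cg) * D := by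
    intro k ρ
    refine (lintegral_mono fun p => hGb k (p, ρ)).trans ?_
    rw [lintegral_const_mul' _ _ ENNReal.ofReal_ne_top]
    gcongr
    exact hDs k ((ε k) ^ 2 • ρ)
  have hCD : ENNReal.ofReal (Cφ * Cψ * Cg) * D ≠ ⊤ := ENNReal.mul_ne_top ENNReal.ofReal_ne_top hDt
  have hGi : ∀ k, Integrable (G k) (ν.prod (volume.restrict B)) := by
    intro k
    refine ⟨(hGm k).aestronglyMeasurable, ?_⟩
    unfold HasFiniteIntegral
    rw [lintegral_prod_symm' _ (hGm k).enorm]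
    refine lt_of_le_of_lt (lintegral_mono fun ρ => hGs k ρ) ?_
    rw [lintegral_const]
    exact ENNReal.mul_lt_top (lt_top_iff_ne_top.2 hCD) (measure_lt_top _ _)
  have hlhs : ∀ k, ∫ x in Q, (∫ ω, (∫ ρ in B, u k (x + (ε k) ^ 2 • ρ) ω) * φ x *
      ψ (T ((ε k)⁻¹ • x) ω) * g (((ε k) ^ 2)⁻¹ • x) ∂μ) = ∫ ρ in B, ∫ p, G k (p, ρ) ∂ν := by
    intro k
    rw [← integral_integral_swap (f := fun p ρ => G k (p, ρ)) (hGi k), hν,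
      integral_prod _ (hGi k).integral_prod_left]
    simp only [hG, integral_mul_const]
  simp only [hlhs]
  refine tendsto_integral_filter_of_dominated_convergence
    (fun _ => (ENNReal.ofReal (Cφ * Cψ * Cg) * D).toReal) ?_ ?_ (integrable_const _) ?_
  · filter_upwards with k
    exact (hGi k).integral_prod_right.aestronglyMeasurable
  · filter_upwards with k
    filter_upwards with ρ
    rw [← ENNReal.ofReal_le_iff_le_toReal hCD, ofReal_norm]
    exact (enorm_integral_le_lintegral_enorm _).trans (hGs k ρ)
  · filter_upwards with ρ
    exact pt_conv μ hΦ T hT Q hQm hQf.ne ε hε hε0 u humeas huzero hδ hi hui u₀ hconv hφ hφc hφQ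
      hψ hg hgp hCφ hCψ hCg ρ
end
end
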